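/- arXiv:0802.3596 — 2 statements merged into one kernel-verified Lean document; each statement's English description precedes it below -/
import Mathlib

section
/- Let U ⊆ ℝ^p × ℝ^q × ℝ^q be an open set, V = {x ∈ ℝ^p : (x,0,0) ∈ U}, and let P : ℝ^p × ℝ^q × ℝ^q → ℝ^p × ℝ^q be the projection (x,η,ξ) ↦ (x,η); set U' = P(U), which is open, with V = {x : (x,0) ∈ U'}. For F ∈ S_{r,c}(Ω_V^U), define P̃_{r,c}(F)(x,η,t) = ∫_{{ξ ∈ ℝ^q : (x,η,ξ,t) ∈ Ω_V^U}} F(x,η,ξ,t) dξ. Then P̃_{r,c}(F) is a well-defined element of S_{r,c}(Ω_V^{U'}); in particular the integral converges for every (x,η,t) ∈ Ω_V^{U'}, P̃_{r,c}(F) is smooth on Ω_V^{U'}, has conic compact support, and satisfies the rapid-decay condition (s1). -/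
/-!
The conic support condition makes the support of `F` closed in the slab `ℝ^p × ℝ^{2q} × [0,1]`:
outside the preimage `S` of the compact set `K` under the continuous map
`(x,ξ,t) ↦ (x,tξ,t)` the function vanishes for `t > 0` by hypothesis, and for `t = 0` by continuity
(`exists_closed_support`). Since `S`, within the slab, lies in the relatively open set `Omega U`,
the extension of `F` by zero is smooth on the whole slab and inherits the rapid decay of all its
derivatives (`dec_indicator`). The fiber integral is therefore the integral over all of `ℝ^q` of a
rapidly decaying function on a slab, and the varying domain of integration disappears
(`PtildeInt_eq`).

On the slab, rapid decay in `(η,ξ)` of order `k + q + 1` splits into `k` powers of `1 + ‖η‖²` and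
the integrable weight `(1 + ‖ξ‖²)^{-(q+1)}` (`Dec.bound`). This gives convergence, and domination
for differentiating under the integral sign. Derivatives at `t = 0` and `t = 1` are one-sided, so
the latter is done within a convex set (`hasFDerivWithinAt_integral`), using the mean value
inequality. Induction on the order shows that the integral is smooth (`Dec.contDiffOn_fiberInt`)
and that its derivatives are the fiber integrals of the corresponding derivatives, which yields
rapid decay (`Dec.dec_fiberInt`). The support of the fiber integral is carried by the projection of
`K` (`hasConicSupport_PtildeInt`).

Derivatives along coordinate directions are handled as lists of directions taken in any order. The
mixed derivatives in `(s1)` are the lists with a prescribed order, and symmetry of second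
derivatives, valid up to the boundary of the slab (`mder_comm`), reduces every list to one of these.
-/

open Set MeasureTheory

noncomputable section

/-- Points of `ℝ^p × ℝ^N × [0,1]` (the interval condition is imposed via the set `Omega`). -/
abbrev Pt (p N : ℕ) := (Fin p → ℝ) × (Fin N → ℝ) × ℝ

/-- `Ω_V^U = {(x,ξ,t) ∈ ℝ^p × ℝ^N × [0,1] : (x, tξ) ∈ U}`. -/
def Omega {p N : ℕ} (U : Set ((Fin p → ℝ) × (Fin N → ℝ))) : Set (Pt p N) :=
  {z | z.2.2 ∈ Icc (0 : ℝ) 1 ∧ (z.1, z.2.2 • z.2.1) ∈ U}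

/-- Directional derivative within a set `s`, as an operator on functions. -/
def mder {p N : ℕ} (s : Set (Pt p N)) (v : Pt p N) (g : Pt p N → ℂ) : Pt p N → ℂ :=
  fun z => fderivWithin ℝ g s z v

/-- Coordinate direction in the `x`-variables. -/
def ex {p N : ℕ} (i : Fin p) : Pt p N := (Pi.single i 1, 0, 0)

/-- Coordinate direction in the fiber (`ξ`) variables. -/
def efib {p N : ℕ} (j : Fin N) : Pt p N := (0, Pi.single j 1, 0)

/-- Coordinate direction in the `t`-variable. -/
def et {p N : ℕ} : Pt p N := (0, 0, 1)

/-- The mixed partial derivative `∂_x^l ∂_ξ^α ∂_t^m g` taken within the set `s`. -/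
def mixedD {p N : ℕ} (s : Set (Pt p N)) (l : Fin p → ℕ) (α : Fin N → ℕ) (m : ℕ)
    (g : Pt p N → ℂ) : Pt p N → ℂ :=
  (List.ofFn fun i : Fin p => (mder s (ex i))^[l i]).foldr (· ∘ ·) id <|
    (List.ofFn fun j : Fin N => (mder s (efib j))^[α j]).foldr (· ∘ ·) id <|
      (mder s et)^[m] g

/-- `K` is a conic compact subset of `U × [0,1]` relative to `V = {x : (x,0) ∈ U}`:
it is compact, contained in `U × [0,1]`, and its points over `t = 0` have vanishing
fiber component (i.e. `K ∩ (U × {0}) ⊆ (V × {0}) × {0}`). -/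
def ConicCompact {p N : ℕ} (U : Set ((Fin p → ℝ) × (Fin N → ℝ))) (K : Set (Pt p N)) : Prop :=
  IsCompact K ∧ (∀ z ∈ K, (z.1, z.2.1) ∈ U ∧ z.2.2 ∈ Icc (0 : ℝ) 1) ∧
    ∀ z ∈ K, z.2.2 = 0 → z.2.1 = 0

/-- `g` has conic compact support: there is a conic compact `K` relative to `V` such
that `g(x,ξ,t) = 0` whenever `t ≠ 0` and `(x, tξ, t) ∉ K`. -/
def HasConicSupport {p N : ℕ} (U : Set ((Fin p → ℝ) × (Fin N → ℝ))) (g : Pt p N → ℂ) : Prop :=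
  ∃ K, ConicCompact U K ∧
    ∀ z ∈ Omega U, z.2.2 ≠ 0 → (z.1, z.2.2 • z.2.1, z.2.2) ∉ K → g z = 0

/-- The rapid decay condition `(s1)`: all mixed partial derivatives are dominated by
arbitrary negative powers of `1 + ‖ξ‖²`, uniformly on `Ω_V^U`. -/
def RapidDecay {p N : ℕ} (U : Set ((Fin p → ℝ) × (Fin N → ℝ))) (g : Pt p N → ℂ) : Prop :=
  ∀ (k m : ℕ) (l : Fin p → ℕ) (α : Fin N → ℕ), ∃ C > 0, ∀ z ∈ Omega U,
    (1 + ‖z.2.1‖ ^ 2) ^ k * ‖mixedD (Omega U) l α m g z‖ ≤ C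

/-- `g ∈ S_{r,c}(Ω_V^U)`: smooth on `Ω_V^U`, conic compact support, rapid decay `(s1)`. -/
def MemSrc {p N : ℕ} (U : Set ((Fin p → ℝ) × (Fin N → ℝ))) (g : Pt p N → ℂ) : Prop :=
  ContDiffOn ℝ (⊤ : ℕ∞) g (Omega U) ∧ HasConicSupport U g ∧ RapidDecay U g

/-- The projection `P : ℝ^p × ℝ^q × ℝ^q → ℝ^p × ℝ^q`, `(x,η,ξ) ↦ (x,η)`, where the fiber
`ℝ^q × ℝ^q` is modeled as `Fin (q+q) → ℝ`, `η` being the first block. -/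
def Pmap {p q : ℕ} (w : (Fin p → ℝ) × (Fin (q + q) → ℝ)) : (Fin p → ℝ) × (Fin q → ℝ) :=
  (w.1, fun j => w.2 (Fin.castAdd q j))

/-- The fiber integration `P̃_{r,c}(F)(x,η,t) = ∫_{{ξ : (x,η,ξ,t) ∈ Ω_V^U}} F(x,η,ξ,t) dξ`. -/
noncomputable def PtildeInt {p q : ℕ} (U : Set ((Fin p → ℝ) × (Fin (q + q) → ℝ)))
    (F : Pt p (q + q) → ℂ) : Pt p q → ℂ :=
  fun z => ∫ ξ in {ξ : Fin q → ℝ | (z.1, z.2.2 • Fin.append z.2.1 ξ) ∈ U},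
    F (z.1, Fin.append z.2.1 ξ, z.2.2)

/-! ### Coordinate directions and iterated derivatives -/

/-- Labels of the coordinate directions of `ℝ^p × ℝ^N × ℝ`: an `x`-direction, a fiber direction,
or the `t`-direction. -/
abbrev Dir (p N : ℕ) := Fin p ⊕ Fin N ⊕ Unit

/-- The coordinate vector with a given label. -/
def bvec {p N : ℕ} : Dir p N → Pt p N
  | .inl i => ex i
  | .inr (.inl j) => efib j
  | .inr (.inr _) => et

/-- Iterated directional derivative within `s` along a list of coordinate directions, the head of
the list being applied last. -/
def mders {p N : ℕ} (s : Set (Pt p N)) (L : List (Dir p N)) (g : Pt p N → ℂ) : Pt p N → ℂ :=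
  L.foldr (fun d h => mder s (bvec d) h) g

/-- The list of directions, in the order used by `mixedD`, encoding `∂_x^l ∂_ξ^α ∂_t^m`. -/
def canon {p N : ℕ} (l : Fin p → ℕ) (α : Fin N → ℕ) (m : ℕ) : List (Dir p N) :=
  ((List.finRange p).flatMap fun i => List.replicate (l i) (.inl i)) ++
    (((List.finRange N).flatMap fun j => List.replicate (α j) (.inr (.inl j))) ++
      List.replicate m (.inr (.inr ())))

/-- The closed slab `ℝ^p × ℝ^N × [0,1]`. -/
def slab (p N : ℕ) : Set (Pt p N) := {z | z.2.2 ∈ Icc (0 : ℝ) 1}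

lemma mders_nil {p N : ℕ} (s : Set (Pt p N)) (g : Pt p N → ℂ) : mders s [] g = g := rfl

lemma mders_cons {p N : ℕ} (s : Set (Pt p N)) (d : Dir p N) (L : List (Dir p N))
    (g : Pt p N → ℂ) : mders s (d :: L) g = mder s (bvec d) (mders s L g) := rfl

lemma mders_append {p N : ℕ} (s : Set (Pt p N)) (L L' : List (Dir p N)) (g : Pt p N → ℂ) :
    mders s (L ++ L') g = mders s L (mders s L' g) := by
  simp [mders]

lemma mders_replicate {p N : ℕ} (s : Set (Pt p N)) (d : Dir p N) (n : ℕ) (g : Pt p N → ℂ) :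
    mders s (List.replicate n d) g = (mder s (bvec d))^[n] g := by
  induction n with
  | zero => rfl
  | succ n ih => rw [List.replicate_succ, mders_cons, ih, Function.iterate_succ_apply']

lemma mders_flatMap {p N : ℕ} (s : Set (Pt p N)) {n : ℕ} (b : Fin n → Dir p N) (l : Fin n → ℕ)
    (L : List (Fin n)) (g : Pt p N → ℂ) :
    mders s (L.flatMap fun i => List.replicate (l i) (b i)) g =
      (L.map fun i => (mder s (bvec (b i)))^[l i]).foldr (· ∘ ·) id g := by
  induction L with
  | nil => rfl
  | cons a L ih =>
    rw [List.flatMap_cons, mders_append, ih, mders_replicate]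
    rfl

lemma mixedD_eq_mders {p N : ℕ} (s : Set (Pt p N)) (l : Fin p → ℕ) (α : Fin N → ℕ) (m : ℕ)
    (g : Pt p N → ℂ) : mixedD s l α m g = mders s (canon l α m) g := by
  rw [canon, mders_append, mders_append, mders_replicate,
    mders_flatMap s (fun j => Sum.inr (Sum.inl j)), mders_flatMap s Sum.inl, mixedD,
    List.ofFn_eq_map, List.ofFn_eq_map]
  rfl

lemma sum_finRange_ite {n : ℕ} (l : Fin n → ℕ) (i : Fin n) :
    ((List.finRange n).map fun j => if j = i then l j else 0).sum = l i := by
  rw [← List.ofFn_eq_map, List.sum_ofFn]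
  simp

/-- Up to order, every list of coordinate directions is the list of a mixed derivative. -/
lemma exists_perm_canon {p N : ℕ} (L : List (Dir p N)) :
    ∃ (l : Fin p → ℕ) (α : Fin N → ℕ) (m : ℕ), L.Perm (canon l α m) := by
  -- the equality test coming from decidable equality is lawful, as `count` requires
  let : BEq (Dir p N) := instBEqOfDecidableEq
  refine ⟨fun i => L.count (.inl i), fun j => L.count (.inr (.inl j)),
    L.count (.inr (.inr ())), List.perm_iff_count.2 fun a => ?_⟩
  rcases a with i | j | u
  · simp [canon, List.count_flatMap, List.count_replicate, Function.comp_def, sum_finRange_ite]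
  · simp [canon, List.count_flatMap, List.count_replicate, Function.comp_def, sum_finRange_ite]
  · simp [canon, List.count_flatMap, List.count_replicate, Function.comp_def]

/-! ### Geometry of the slab -/

lemma convex_slab (p N : ℕ) : Convex ℝ (slab p N) :=
  (convex_Icc (0 : ℝ) 1).linear_preimage
    ((LinearMap.snd ℝ (Fin N → ℝ) ℝ) ∘ₗ (LinearMap.snd ℝ (Fin p → ℝ) ((Fin N → ℝ) × ℝ)))

lemma interior_slab_nonempty (p N : ℕ) : (interior (slab p N)).Nonempty := by
  refine ⟨(0, 0, 1 / 2), mem_interior.2 ⟨(fun z : Pt p N => z.2.2) ⁻¹' Ioo (0 : ℝ) 1, ?_,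
    isOpen_Ioo.preimage (by fun_prop), ?_⟩⟩
  · exact fun z hz => Ioo_subset_Icc_self hz
  · norm_num

lemma uniqueDiffOn_slab (p N : ℕ) : UniqueDiffOn ℝ (slab p N) :=
  uniqueDiffOn_convex (convex_slab p N) (interior_slab_nonempty p N)

lemma slab_subset_closure_interior (p N : ℕ) : slab p N ⊆ closure (interior (slab p N)) := by
  rw [(convex_slab p N).closure_interior_eq_closure_of_nonempty_interior
    (interior_slab_nonempty p N)]
  exact subset_closure

/-- The open set `{(x,ξ,t) : (x,tξ) ∈ U}`, whose trace on the slab is `Omega U`. -/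
def cone {p N : ℕ} (U : Set ((Fin p → ℝ) × (Fin N → ℝ))) : Set (Pt p N) :=
  {z | (z.1, z.2.2 • z.2.1) ∈ U}

lemma isOpen_cone {p N : ℕ} {U : Set ((Fin p → ℝ) × (Fin N → ℝ))} (hU : IsOpen U) :
    IsOpen (cone U) :=
  hU.preimage (by fun_prop : Continuous fun z : Pt p N => (z.1, z.2.2 • z.2.1))

lemma Omega_eq {p N : ℕ} (U : Set ((Fin p → ℝ) × (Fin N → ℝ))) :
    Omega U = slab p N ∩ cone U := rfl

/-! ### Locality, smoothness and symmetry of iterated derivatives -/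

/-- Directional derivatives are local: they may be computed within the slab or within a relatively
open subset of it. -/
lemma mders_inter {p N : ℕ} {s W : Set (Pt p N)} (hW : IsOpen W) (L : List (Dir p N))
    {g g' : Pt p N → ℂ} (h : EqOn g g' (s ∩ W)) :
    EqOn (mders (s ∩ W) L g) (mders s L g') (s ∩ W) := by
  induction L with
  | nil => exact h
  | cons d L ih =>
    intro z hz
    rw [mders_cons, mders_cons, mder, mder, fderivWithin_congr ih (ih hz),
      fderivWithin_inter (hW.mem_nhds hz.2)]

lemma mder_congr {p N : ℕ} {s : Set (Pt p N)} {g g' : Pt p N → ℂ} (h : EqOn g g' s)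
    (v : Pt p N) : EqOn (mder s v g) (mder s v g') s := by
  intro z hz
  rw [mder, mder, fderivWithin_congr h (h hz)]

lemma mders_zero {p N : ℕ} (s : Set (Pt p N)) (L : List (Dir p N)) :
    mders s L (fun _ => 0) = fun _ => 0 := by
  induction L with
  | nil => rfl
  | cons d L ih =>
    rw [mders_cons, ih]
    ext z
    simp [mder]

lemma contDiffOn_mder {p N : ℕ} {g : Pt p N → ℂ} (hg : ContDiffOn ℝ (⊤ : ℕ∞) g (slab p N))
    (v : Pt p N) : ContDiffOn ℝ (⊤ : ℕ∞) (mder (slab p N) v g) (slab p N) :=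
  (hg.fderivWithin (uniqueDiffOn_slab p N) (by simp)).clm_apply contDiffOn_const

lemma contDiffOn_mders {p N : ℕ} {g : Pt p N → ℂ} (hg : ContDiffOn ℝ (⊤ : ℕ∞) g (slab p N))
    (L : List (Dir p N)) : ContDiffOn ℝ (⊤ : ℕ∞) (mders (slab p N) L g) (slab p N) := by
  induction L with
  | nil => exact hg
  | cons d L ih => exact contDiffOn_mder ih _

/-- Symmetry of second derivatives, including on the boundary `t = 0`, `t = 1` of the slab. -/
lemma mder_comm {p N : ℕ} {g : Pt p N → ℂ} (hg : ContDiffOn ℝ (⊤ : ℕ∞) g (slab p N))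
    (v w : Pt p N) : EqOn (mder (slab p N) v (mder (slab p N) w g))
      (mder (slab p N) w (mder (slab p N) v g)) (slab p N) := by
  intro z hz
  have hd : DifferentiableWithinAt ℝ (fderivWithin ℝ g (slab p N)) (slab p N) z :=
    ((hg.fderivWithin (m := 1) (uniqueDiffOn_slab p N) (by norm_cast)).differentiableOn
      (by simp)) z hz
  have key : ∀ a b : Pt p N, mder (slab p N) a (mder (slab p N) b g) z =
      fderivWithin ℝ (fderivWithin ℝ g (slab p N)) (slab p N) z a b := by
    intro a b
    have := (hd.hasFDerivWithinAt.clm_apply (hasFDerivWithinAt_const b z (slab p N))).fderivWithin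
      (uniqueDiffOn_slab p N z hz)
    unfold mder
    rw [this]
    simp
  rw [key, key]
  exact (hg z hz).isSymmSndFDerivWithinAt (by simp; norm_cast)
    (uniqueDiffOn_slab p N) (slab_subset_closure_interior p N hz) hz v w

lemma mders_perm {p N : ℕ} {g : Pt p N → ℂ} (hg : ContDiffOn ℝ (⊤ : ℕ∞) g (slab p N))
    {L L' : List (Dir p N)} (h : L.Perm L') :
    EqOn (mders (slab p N) L g) (mders (slab p N) L' g) (slab p N) := by
  induction h with
  | nil => exact fun _ _ => rfl
  | cons d _ ih => exact mder_congr ih _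
  | swap d d' L => exact mder_comm (contDiffOn_mders hg L) _ _
  | trans _ _ ih ih' => exact ih.trans ih'

/-! ### Coordinates -/

/-- The coordinate of `v` along the direction `d`. -/
def coord {p N : ℕ} (v : Pt p N) : Dir p N → ℝ :=
  Sum.elim v.1 (Sum.elim v.2.1 fun _ => v.2.2)

lemma sum_coord {p N : ℕ} (v : Pt p N) : ∑ d, coord v d • bvec d = v := by
  obtain ⟨x, ξ, t⟩ := v
  simp only [Fintype.sum_sum_type, coord, bvec, ex, efib, et, Sum.elim_inl, Sum.elim_inr]
  refine Prod.ext ?_ (Prod.ext ?_ ?_)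
  · ext i
    simp [Prod.fst_sum, Finset.sum_apply, Pi.single_apply]
  · ext i
    simp [Prod.fst_sum, Prod.snd_sum, Finset.sum_apply, Pi.single_apply]
  · simp [Prod.snd_sum]

lemma abs_coord_le {p N : ℕ} (v : Pt p N) (d : Dir p N) : |coord v d| ≤ ‖v‖ := by
  rcases d with i | j | u
  · exact (norm_le_pi_norm v.1 i).trans (norm_fst_le v)
  · exact (norm_le_pi_norm v.2.1 j).trans ((norm_fst_le v.2).trans (norm_snd_le v))
  · exact (norm_snd_le v.2).trans (norm_snd_le v)

lemma clm_apply_eq_sum {p N : ℕ} (A : Pt p N →L[ℝ] ℂ) (v : Pt p N) :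
    A v = ∑ d, coord v d • A (bvec d) := by
  conv_lhs => rw [← sum_coord v]
  simp [map_sum]

lemma clm_norm_le_sum {p N : ℕ} (A : Pt p N →L[ℝ] ℂ) : ‖A‖ ≤ ∑ d, ‖A (bvec d)‖ := by
  refine A.opNorm_le_bound (by positivity) fun v => ?_
  rw [clm_apply_eq_sum, Finset.sum_mul]
  refine (norm_sum_le _ _).trans (Finset.sum_le_sum fun d _ => ?_)
  rw [norm_smul, mul_comm]
  exact mul_le_mul_of_nonneg_left (abs_coord_le v d) (norm_nonneg _)

/-! ### Differentiation under the integral sign within a convex set -/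

/-- Dominated differentiation of a parametric integral, where the parameter is restricted to a
convex set and derivatives are taken within that set. The mean value inequality bounds the
difference quotients by twice the bound on the derivatives. -/
lemma hasFDerivWithinAt_integral {E X : Type*} [NormedAddCommGroup E] [NormedSpace ℝ E]
    [MeasurableSpace X] {μ : Measure X} {s : Set E} (hs : Convex ℝ s) {G : E → X → ℂ}
    {G' : E → X → E →L[ℝ] ℂ} {b : X → ℝ} (hb : Integrable b μ)
    (hint : ∀ z ∈ s, Integrable (G z) μ) (hint' : ∀ z ∈ s, Integrable (G' z) μ)
    (hbound : ∀ z ∈ s, ∀ ξ, ‖G' z ξ‖ ≤ b ξ)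
    (hderiv : ∀ z ∈ s, ∀ ξ, HasFDerivWithinAt (G · ξ) (G' z ξ) s z) {z : E} (hz : z ∈ s) :
    HasFDerivWithinAt (fun z => ∫ ξ, G z ξ ∂μ) (∫ ξ, G' z ξ ∂μ) s z := by
  rw [hasFDerivWithinAt_iff_tendsto]
  have hb0 : ∀ ξ, 0 ≤ b ξ := fun ξ => (norm_nonneg _).trans (hbound z hz ξ)
  have hint2 : ∀ z' ∈ s, Integrable (fun ξ => G z' ξ - G z ξ - G' z ξ (z' - z)) μ := fun z' hz' =>
    ((hint z' hz').sub (hint z hz)).sub ((hint' z hz).apply_continuousLinearMap _)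
  have hlim : Filter.Tendsto
      (fun z' => ∫ ξ, ‖z' - z‖⁻¹ • (G z' ξ - G z ξ - G' z ξ (z' - z)) ∂μ)
      (nhdsWithin z s) (nhds (∫ _, (0 : ℂ) ∂μ)) := by
    refine tendsto_integral_filter_of_dominated_convergence (fun ξ => 2 * b ξ) ?_ ?_
      (hb.const_mul 2) (Filter.Eventually.of_forall fun ξ => ?_)
    · filter_upwards [self_mem_nhdsWithin] with z' hz'
      exact ((hint2 z' hz').smul (‖z' - z‖⁻¹)).aestronglyMeasurable
    · filter_upwards [self_mem_nhdsWithin] with z' hz'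
      refine Filter.Eventually.of_forall fun ξ => ?_
      have h1 : ‖G z' ξ - G z ξ‖ ≤ b ξ * ‖z' - z‖ :=
        hs.norm_image_sub_le_of_norm_hasFDerivWithin_le (fun w hw => hderiv w hw ξ)
          (fun w hw => hbound w hw ξ) hz hz'
      have h2 : ‖G' z ξ (z' - z)‖ ≤ b ξ * ‖z' - z‖ :=
        (G' z ξ).le_of_opNorm_le (hbound z hz ξ) _
      have h3 : ‖G z' ξ - G z ξ - G' z ξ (z' - z)‖ ≤ 2 * b ξ * ‖z' - z‖ := by
        refine (norm_sub_le _ _).trans ?_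
        linarith
      rw [norm_smul, norm_inv, norm_norm]
      rcases eq_or_ne ‖z' - z‖ 0 with h0 | h0
      · rw [h0]
        simpa using hb0 ξ
      · rw [inv_mul_le_iff₀ (lt_of_le_of_ne (norm_nonneg _) h0.symm)]
        linarith
    · rw [tendsto_zero_iff_norm_tendsto_zero]
      simpa only [norm_smul, norm_inv, norm_norm] using
        hasFDerivWithinAt_iff_tendsto.1 (hderiv z hz ξ)
  rw [integral_zero, tendsto_zero_iff_norm_tendsto_zero] at hlim
  refine hlim.congr' ?_
  filter_upwards [self_mem_nhdsWithin] with z' hz'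
  rw [integral_smul, norm_smul, norm_inv, norm_norm, integral_sub, integral_sub,
    ContinuousLinearMap.integral_apply (hint' z hz)]
  exacts [hint z' hz', hint z hz, (hint z' hz').sub (hint z hz),
    (hint' z hz).apply_continuousLinearMap _]

/-! ### Rapidly decaying functions on the slab and their fiber integrals -/

/-- Smooth functions on the slab all of whose iterated coordinate derivatives, in any order, decay
rapidly in the fiber variable, uniformly in the remaining variables. -/
structure Dec {p N : ℕ} (g : Pt p N → ℂ) : Prop where
  smooth : ContDiffOn ℝ (⊤ : ℕ∞) g (slab p N)
  decay : ∀ (L : List (Dir p N)) (k : ℕ), ∃ C : ℝ, ∀ z ∈ slab p N,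
    (1 + ‖z.2.1‖ ^ 2) ^ k * ‖mders (slab p N) L g z‖ ≤ C

lemma Dec.dec_mder {p N : ℕ} {g : Pt p N → ℂ} (hg : Dec g) (d : Dir p N) :
    Dec (mder (slab p N) (bvec d) g) where
  smooth := contDiffOn_mder hg.smooth _
  decay L k := by
    obtain ⟨C, hC⟩ := hg.decay (L ++ [d]) k
    rw [mders_append] at hC
    exact ⟨C, hC⟩

lemma Dec.dec_mders {p N : ℕ} {g : Pt p N → ℂ} (hg : Dec g) (L : List (Dir p N)) :
    Dec (mders (slab p N) L g) := by
  induction L with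
  | nil => exact hg
  | cons d L ih => exact ih.dec_mder d

/-- The point `(x,η,ξ,t)` over `(x,η,t)`. -/
def insertPt {p q : ℕ} (z : Pt p q) (ξ : Fin q → ℝ) : Pt p (q + q) :=
  (z.1, Fin.append z.2.1 ξ, z.2.2)

/-- The linear inclusion `(x,η,t) ↦ (x,η,0,t)`. -/
def liftL (p q : ℕ) : Pt p q →L[ℝ] Pt p (q + q) :=
  LinearMap.toContinuousLinearMap
    { toFun := fun z => insertPt z 0
      map_add' := fun z w => by
        refine Prod.ext rfl (Prod.ext ?_ rfl)
        ext i
        refine Fin.addCases (fun j => ?_) (fun j => ?_) i <;> simp [insertPt, -Fin.natAdd_eq_addNat]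
      map_smul' := fun c z => by
        refine Prod.ext rfl (Prod.ext ?_ rfl)
        ext i
        refine Fin.addCases (fun j => ?_) (fun j => ?_) i <;> simp [insertPt, -Fin.natAdd_eq_addNat] }

lemma liftL_apply {p q : ℕ} (z : Pt p q) : liftL p q z = insertPt z 0 := rfl

lemma insertPt_eq {p q : ℕ} (z : Pt p q) (ξ : Fin q → ℝ) :
    insertPt z ξ = liftL p q z + insertPt 0 ξ := by
  rw [liftL_apply]
  refine Prod.ext (by simp [insertPt]) (Prod.ext ?_ (by simp [insertPt]))
  ext i
  refine Fin.addCases (fun j => ?_) (fun j => ?_) i <;> simp [insertPt, -Fin.natAdd_eq_addNat]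

lemma continuous_insertPt {p q : ℕ} (z : Pt p q) : Continuous (insertPt z) := by
  refine continuous_const.prodMk (Continuous.prodMk (continuous_pi fun i => ?_) continuous_const)
  refine Fin.addCases (fun j => ?_) (fun j => ?_) i
  · simpa only [Fin.append_left] using continuous_const
  · simpa only [Fin.append_right] using continuous_apply j

lemma insertPt_mem_slab {p q : ℕ} {z : Pt p q} (hz : z ∈ slab p q) (ξ : Fin q → ℝ) :
    insertPt z ξ ∈ slab p (q + q) := hz

lemma hasFDerivWithinAt_insertPt {p q : ℕ} (z : Pt p q) (ξ : Fin q → ℝ) (s : Set (Pt p q)) :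
    HasFDerivWithinAt (fun z => insertPt z ξ) (liftL p q) s z := by
  rw [funext fun w : Pt p q => insertPt_eq w ξ]
  exact (liftL p q).hasFDerivWithinAt.add_const _

lemma norm_le_norm_append_left {q : ℕ} (η ξ : Fin q → ℝ) : ‖η‖ ≤ ‖Fin.append η ξ‖ :=
  (pi_norm_le_iff_of_nonneg (norm_nonneg _)).2 fun j => by
    simpa using norm_le_pi_norm (Fin.append η ξ) (Fin.castAdd q j)

lemma norm_le_norm_append_right {q : ℕ} (η ξ : Fin q → ℝ) : ‖ξ‖ ≤ ‖Fin.append η ξ‖ :=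
  (pi_norm_le_iff_of_nonneg (norm_nonneg _)).2 fun j => by
    simpa only [Fin.append_right] using norm_le_pi_norm (Fin.append η ξ) (Fin.natAdd q j)

/-- The direction of `(x,η,ξ,t)`-space corresponding to a direction of `(x,η,t)`-space. -/
def liftDir {p q : ℕ} : Dir p q → Dir p (q + q) :=
  Sum.map id (Sum.map (Fin.castAdd q) id)

lemma liftL_bvec {p q : ℕ} (d : Dir p q) : liftL p q (bvec d) = bvec (liftDir d) := by
  rw [liftL_apply]
  rcases d with i | j | u <;> refine Prod.ext rfl (Prod.ext ?_ rfl) <;> ext k <;>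
    refine Fin.addCases (fun m => ?_) (fun m => ?_) k <;>
    simp [insertPt, liftDir, bvec, ex, efib, et, Pi.single_apply, Fin.ext_iff,
      -Fin.natAdd_eq_addNat]
  have := j.isLt
  omega

/-- The integrable weight `(1+‖ξ‖²)^{-(q+1)}`. -/
def weight {q : ℕ} (ξ : Fin q → ℝ) : ℝ := ((1 + ‖ξ‖ ^ 2) ^ (q + 1))⁻¹

lemma weight_nonneg {q : ℕ} (ξ : Fin q → ℝ) : 0 ≤ weight ξ := by
  unfold weight
  positivity

lemma integrable_weight (q : ℕ) : Integrable (weight : (Fin q → ℝ) → ℝ) := by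
  have h := integrable_rpow_neg_one_add_norm_sq (E := Fin q → ℝ) (μ := volume)
    (r := 2 * ((q + 1 : ℕ) : ℝ)) (by simp; linarith)
  refine h.congr (Filter.Eventually.of_forall fun ξ => ?_)
  have h0 : (0 : ℝ) ≤ 1 + ‖ξ‖ ^ 2 := by positivity
  simp only [weight]
  rw [show -(2 * ((q + 1 : ℕ) : ℝ)) / 2 = -((q + 1 : ℕ) : ℝ) by ring, Real.rpow_neg h0,
    Real.rpow_natCast]

/-- Rapid decay in `(η,ξ)` controls powers of `1+‖η‖²` with an integrable weight in `ξ` to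
spare. -/
lemma Dec.bound {p q : ℕ} {g : Pt p (q + q) → ℂ} (hg : Dec g) (k : ℕ) :
    ∃ C : ℝ, ∀ z ∈ slab p q, ∀ ξ,
      (1 + ‖z.2.1‖ ^ 2) ^ k * ‖g (insertPt z ξ)‖ ≤ C * weight ξ := by
  obtain ⟨C, hC⟩ := hg.decay [] (k + (q + 1))
  refine ⟨C, fun z hz ξ => ?_⟩
  have h := hC _ (insertPt_mem_slab hz ξ)
  rw [weight, ← div_eq_mul_inv, le_div_iff₀ (by positivity)]
  refine le_trans ?_ h
  rw [mders_nil, pow_add _ k (q + 1)]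
  have h1 := norm_le_norm_append_left z.2.1 ξ
  have h2 := norm_le_norm_append_right z.2.1 ξ
  simp only [insertPt]
  rw [mul_right_comm]
  gcongr

lemma Dec.integrable {p q : ℕ} {g : Pt p (q + q) → ℂ} (hg : Dec g) {z : Pt p q}
    (hz : z ∈ slab p q) : Integrable (fun ξ => g (insertPt z ξ)) := by
  obtain ⟨C, hC⟩ := hg.bound 0
  refine ((integrable_weight q).const_mul C).mono' ?_
    (Filter.Eventually.of_forall fun ξ => by simpa using hC z hz ξ)
  exact (hg.smooth.continuousOn.comp_continuous (continuous_insertPt z)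
    (insertPt_mem_slab hz)).aestronglyMeasurable

/-- Integration over the last `q` fiber variables of a function on
`ℝ^p × ℝ^q × ℝ^q × ℝ`. -/
def fiberInt {p q : ℕ} (g : Pt p (q + q) → ℂ) : Pt p q → ℂ := fun z => ∫ ξ, g (insertPt z ξ)

/-- The fiber integral is differentiable, and its coordinate derivatives are the fiber integrals of
the corresponding coordinate derivatives of the integrand. -/
lemma Dec.hasFDerivWithinAt_fiberInt {p q : ℕ} {g : Pt p (q + q) → ℂ} (hg : Dec g) {z : Pt p q}
    (hz : z ∈ slab p q) :
    ∃ A : Pt p q →L[ℝ] ℂ, HasFDerivWithinAt (fiberInt g) A (slab p q) z ∧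
      ∀ d, A (bvec d) = fiberInt (mder (slab p (q + q)) (bvec (liftDir d)) g) z := by
  set S := slab p (q + q) with hS
  have hC : ∀ d : Dir p q, ∃ C : ℝ, ∀ z ∈ slab p q, ∀ ξ,
      ‖fderivWithin ℝ g S (insertPt z ξ) (bvec (liftDir d))‖ ≤ C * weight ξ := by
    intro d
    obtain ⟨C, hC⟩ := (hg.dec_mder (liftDir d)).bound 0
    exact ⟨C, fun z hz ξ => by simpa [mder] using hC z hz ξ⟩
  choose C hC using hC
  let G' : Pt p q → (Fin q → ℝ) → Pt p q →L[ℝ] ℂ := fun z ξ =>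
    (fderivWithin ℝ g S (insertPt z ξ)).comp (liftL p q)
  have hbound : ∀ z ∈ slab p q, ∀ ξ, ‖G' z ξ‖ ≤ (∑ d, C d) * weight ξ := by
    intro z hz ξ
    refine (clm_norm_le_sum _).trans ?_
    rw [Finset.sum_mul]
    refine Finset.sum_le_sum fun d _ => ?_
    simpa [G', liftL_bvec] using hC d z hz ξ
  have hbint : Integrable fun ξ : Fin q → ℝ => (∑ d, C d) * weight ξ :=
    (integrable_weight q).const_mul _
  have hint' : ∀ z ∈ slab p q, Integrable (G' z) := by
    intro z hz
    refine hbint.mono' ?_ (Filter.Eventually.of_forall (hbound z hz))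
    have h1 : Continuous fun ξ => fderivWithin ℝ g S (insertPt z ξ) :=
      (hg.smooth.continuousOn_fderivWithin (uniqueDiffOn_slab _ _) (by simp)).comp_continuous
        (continuous_insertPt z) (insertPt_mem_slab hz)
    exact (h1.clm_comp continuous_const).aestronglyMeasurable
  refine ⟨∫ ξ, G' z ξ, hasFDerivWithinAt_integral (convex_slab p q) hbint
    (fun z hz => hg.integrable hz) hint' hbound (fun z hz ξ => ?_) hz, fun d => ?_⟩
  · exact HasFDerivWithinAt.comp z
      ((hg.smooth.differentiableOn (by simp)) _ (insertPt_mem_slab hz ξ)).hasFDerivWithinAt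
      (hasFDerivWithinAt_insertPt z ξ _) fun w hw => insertPt_mem_slab hw ξ
  · rw [ContinuousLinearMap.integral_apply (hint' z hz)]
    simp only [G', ContinuousLinearMap.comp_apply, liftL_bvec]
    rfl

lemma Dec.mder_fiberInt {p q : ℕ} {g : Pt p (q + q) → ℂ} (hg : Dec g) (d : Dir p q) :
    EqOn (mder (slab p q) (bvec d) (fiberInt g))
      (fiberInt (mder (slab p (q + q)) (bvec (liftDir d)) g)) (slab p q) := by
  intro z hz
  obtain ⟨A, hA, hd⟩ := hg.hasFDerivWithinAt_fiberInt hz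
  rw [mder, hA.fderivWithin (uniqueDiffOn_slab p q z hz), hd]

lemma Dec.mders_fiberInt {p q : ℕ} {g : Pt p (q + q) → ℂ} (hg : Dec g) (L : List (Dir p q)) :
    EqOn (mders (slab p q) L (fiberInt g))
      (fiberInt (mders (slab p (q + q)) (L.map liftDir) g)) (slab p q) := by
  induction L with
  | nil => exact fun _ _ => rfl
  | cons d L ih =>
    rw [List.map_cons, mders_cons, mders_cons]
    exact (mder_congr ih _).trans ((hg.dec_mders _).mder_fiberInt d)

lemma Dec.contDiffOn_fiberInt {p q : ℕ} {g : Pt p (q + q) → ℂ} (hg : Dec g) :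
    ContDiffOn ℝ (⊤ : ℕ∞) (fiberInt g) (slab p q) := by
  refine contDiffOn_infty.2 fun n => ?_
  induction n generalizing g with
  | zero =>
    refine contDiffOn_zero.2 fun z hz => ?_
    obtain ⟨A, hA, -⟩ := hg.hasFDerivWithinAt_fiberInt hz
    exact hA.continuousWithinAt
  | succ n ih =>
    rw [Nat.cast_succ, contDiffOn_succ_iff_fderiv_apply (uniqueDiffOn_slab p q)]
    refine ⟨fun z hz => ?_, fun h => by simp at h, fun v => ?_⟩
    · obtain ⟨A, hA, -⟩ := hg.hasFDerivWithinAt_fiberInt hz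
      exact hA.differentiableWithinAt
    · simp only [clm_apply_eq_sum _ v]
      refine ContDiffOn.sum fun d _ => ContDiffOn.const_smul (coord v d) ?_
      exact (ih (hg.dec_mder (liftDir d))).congr (hg.mder_fiberInt d)

lemma Dec.dec_fiberInt {p q : ℕ} {g : Pt p (q + q) → ℂ} (hg : Dec g) : Dec (fiberInt g) where
  smooth := hg.contDiffOn_fiberInt
  decay L k := by
    obtain ⟨C, hC⟩ := (hg.dec_mders (L.map liftDir)).bound k
    refine ⟨∫ ξ : Fin q → ℝ, C * weight ξ, fun z hz => ?_⟩
    rw [hg.mders_fiberInt L hz]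
    calc (1 + ‖z.2.1‖ ^ 2) ^ k * ‖fiberInt _ z‖
        ≤ (1 + ‖z.2.1‖ ^ 2) ^ k * ∫ ξ, ‖mders _ (L.map liftDir) g (insertPt z ξ)‖ := by
          gcongr
          exact norm_integral_le_integral_norm _
      _ = ∫ ξ, (1 + ‖z.2.1‖ ^ 2) ^ k * ‖mders _ (L.map liftDir) g (insertPt z ξ)‖ :=
          (integral_const_mul _ _).symm
      _ ≤ ∫ ξ : Fin q → ℝ, C * weight ξ :=
          integral_mono (((hg.dec_mders _).integrable hz).norm.const_mul _)
            ((integrable_weight q).const_mul C) (hC z hz)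

/-! ### Extension by zero -/

/-- A function on `Omega U` with conic compact support vanishes outside a closed set `S` whose trace
on the slab lies in `Omega U`, namely the preimage of `K` under `(x,ξ,t) ↦ (x,tξ,t)`. At `t = 0` the vanishing follows by continuity from `t > 0`. -/
lemma exists_closed_support {p N : ℕ} {U : Set ((Fin p → ℝ) × (Fin N → ℝ))} (hU : IsOpen U)
    {F : Pt p N → ℂ} (hF : ContDiffOn ℝ (⊤ : ℕ∞) F (Omega U)) (hS : HasConicSupport U F) :
    ∃ S : Set (Pt p N), IsClosed S ∧ slab p N ∩ S ⊆ Omega U ∧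
      ∀ z ∈ Omega U, z ∉ S → F z = 0 := by
  obtain ⟨K, ⟨hK, hKU, -⟩, hvan⟩ := hS
  have hScl : IsClosed ((fun z : Pt p N => ((z.1, z.2.2 • z.2.1, z.2.2) : Pt p N)) ⁻¹' K) :=
    hK.isClosed.preimage (by fun_prop)
  refine ⟨_, hScl, fun z hz => ⟨hz.1, (hKU _ hz.2).1⟩, fun z hz hzS => ?_⟩
  rcases ne_or_eq z.2.2 0 with ht | ht
  · exact hvan z hz ht hzS
  · -- approach `z` along `s ↦ (x,ξ,s)` with `s → 0⁺`
    let c : ℝ → Pt p N := fun s => (z.1, z.2.1, s)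
    have hc : Continuous c := by fun_prop
    have hc0 : c 0 = z := by rw [← ht]
    have hct : Filter.Tendsto c (nhdsWithin 0 (Ioi 0)) (nhds z) :=
      hc0 ▸ (hc.tendsto 0).mono_left nhdsWithin_le_nhds
    have h1 : ∀ᶠ s in nhdsWithin (0 : ℝ) (Ioi 0), c s ∈ cone U :=
      hct ((isOpen_cone hU).mem_nhds hz.2)
    have h2 := hct (hScl.isOpen_compl.mem_nhds hzS)
    have h3 : ∀ᶠ s in nhdsWithin (0 : ℝ) (Ioi 0), s ∈ Ioc (0 : ℝ) 1 :=
      Ioc_mem_nhdsGT one_pos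
    have h4 : ∀ᶠ s in nhdsWithin (0 : ℝ) (Ioi 0), c s ∈ Omega U := by
      filter_upwards [h1, h3] with s hs hs' using ⟨⟨hs'.1.le, hs'.2⟩, hs⟩
    have h5 : Filter.Tendsto (fun s => F (c s)) (nhdsWithin 0 (Ioi 0)) (nhds (F z)) :=
      (hF.continuousOn z hz).tendsto.comp
        (tendsto_nhdsWithin_iff.2 ⟨hct, h4⟩)
    refine tendsto_nhds_unique h5 (tendsto_const_nhds.congr' ?_)
    filter_upwards [h2, h3, h4] with s hs hs' hs''
    exact (hvan (c s) hs'' hs'.1.ne' hs).symm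

/-- Extension by zero carries `S_{r,c}(Ω_V^U)` into the rapidly decaying functions on the slab. -/
lemma dec_indicator {p N : ℕ} {U : Set ((Fin p → ℝ) × (Fin N → ℝ))} (hU : IsOpen U)
    {F : Pt p N → ℂ} (hF : MemSrc U F) : Dec ((Omega U).indicator F) := by
  obtain ⟨hsm, hsupp, hdec⟩ := hF
  obtain ⟨S, hS, hSO, hvan⟩ := exists_closed_support hU hsm hsupp
  have hzero : EqOn (fun _ => (0 : ℂ)) ((Omega U).indicator F) (slab p N ∩ Sᶜ) := by
    intro z hz
    by_cases h : z ∈ Omega U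
    · simp [h, hvan z h hz.2]
    · simp [h]
  have heq : EqOn F ((Omega U).indicator F) (slab p N ∩ cone U) := fun z hz =>
    (indicator_of_mem (s := Omega U) hz F).symm
  have hnot : ∀ z ∈ slab p N, z ∉ Omega U → z ∈ Sᶜ := fun z hz h hzS => h (hSO ⟨hz, hzS⟩)
  have hsmooth : ContDiffOn ℝ (⊤ : ℕ∞) ((Omega U).indicator F) (slab p N) := by
    intro z hz
    by_cases h : z ∈ Omega U
    · refine (contDiffWithinAt_inter ((isOpen_cone hU).mem_nhds h.2)).1 ?_
      exact (hsm z h).congr (fun w hw => (heq hw).symm) (heq h).symm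
    · have hz' := hnot z hz h
      refine (contDiffWithinAt_inter (hS.isOpen_compl.mem_nhds hz')).1 ?_
      exact contDiffWithinAt_const.congr (fun w hw => (hzero hw).symm) (hzero ⟨hz, hz'⟩).symm
  refine ⟨hsmooth, fun L k => ?_⟩
  obtain ⟨l, α, m, hperm⟩ := exists_perm_canon L
  obtain ⟨C, hC, hb⟩ := hdec k m l α
  refine ⟨C, fun z hz => ?_⟩
  by_cases h : z ∈ Omega U
  · have h1 := hb z h
    rw [mixedD_eq_mders] at h1
    rwa [mders_perm hsmooth hperm hz, ← mders_inter (isOpen_cone hU) _ heq h]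
  · rw [← mders_inter hS.isOpen_compl L hzero ⟨hz, hnot z hz h⟩, mders_zero]
    simpa using hC.le

/-! ### The projection -/

lemma isOpenMap_Pmap (p q : ℕ) : IsOpenMap (Pmap : (Fin p → ℝ) × (Fin (q + q) → ℝ) → _) := by
  let f : ((Fin p → ℝ) × (Fin (q + q) → ℝ)) →L[ℝ] (Fin p → ℝ) × (Fin q → ℝ) :=
    (ContinuousLinearMap.fst ℝ _ _).prod (ContinuousLinearMap.pi fun j =>
      (ContinuousLinearMap.proj (Fin.castAdd q j)).comp (ContinuousLinearMap.snd ℝ _ _))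
  refine f.isOpenMap fun w => ⟨(w.1, Fin.append w.2 0), ?_⟩
  exact Prod.ext rfl (funext fun j => Fin.append_left _ _ j)

lemma Pmap_smul_append {p q : ℕ} (x : Fin p → ℝ) (t : ℝ) (η ξ : Fin q → ℝ) :
    Pmap (x, t • Fin.append η ξ) = (x, t • η) := by
  refine Prod.ext rfl (funext fun j => ?_)
  simp [Pmap]

lemma PtildeInt_eq {p q : ℕ} {U : Set ((Fin p → ℝ) × (Fin (q + q) → ℝ))} (hU : IsOpen U)
    (F : Pt p (q + q) → ℂ) :
    EqOn (PtildeInt U F) (fiberInt ((Omega U).indicator F)) (slab p q) := by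
  intro z hz
  have hm : MeasurableSet {ξ : Fin q → ℝ | (z.1, z.2.2 • Fin.append z.2.1 ξ) ∈ U} :=
    ((isOpen_cone hU).preimage (continuous_insertPt z)).measurableSet
  rw [PtildeInt, ← integral_indicator hm, fiberInt]
  refine integral_congr_ae (Filter.Eventually.of_forall fun ξ => ?_)
  by_cases h : (z.1, z.2.2 • Fin.append z.2.1 ξ) ∈ U
  · have h' : insertPt z ξ ∈ Omega U := ⟨hz, h⟩
    exact (indicator_of_mem (s := {ξ : Fin q → ℝ | (z.1, z.2.2 • Fin.append z.2.1 ξ) ∈ U}) h _).trans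
      (indicator_of_mem h' F).symm
  · have h' : insertPt z ξ ∉ Omega U := fun h' => h h'.2
    exact (indicator_of_notMem (s := {ξ : Fin q → ℝ | (z.1, z.2.2 • Fin.append z.2.1 ξ) ∈ U})
      h _).trans (indicator_of_notMem h' F).symm

/-- The image under the projection of a conic compact set carrying the support of `F` carries the
support of its fiber integral. -/
lemma hasConicSupport_PtildeInt {p q : ℕ} {U : Set ((Fin p → ℝ) × (Fin (q + q) → ℝ))}
    {F : Pt p (q + q) → ℂ} (hF : HasConicSupport U F) :
    HasConicSupport (Pmap '' U) (PtildeInt U F) := by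
  obtain ⟨K, ⟨hK, hKU, hK0⟩, hvan⟩ := hF
  refine ⟨(fun z : Pt p (q + q) => (z.1, (fun j => z.2.1 (Fin.castAdd q j)), z.2.2)) '' K,
    ⟨hK.image (by fun_prop), ?_, ?_⟩, ?_⟩
  · rintro _ ⟨z, hz, rfl⟩
    exact ⟨⟨_, (hKU z hz).1, rfl⟩, (hKU z hz).2⟩
  · rintro _ ⟨z, hz, rfl⟩ ht
    ext j
    simp [hK0 z hz ht]
  · intro z hz ht hzK
    refine setIntegral_eq_zero_of_forall_eq_zero fun ξ hξ => ?_
    refine hvan (insertPt z ξ) ⟨hz.1, hξ⟩ ht fun hmem => hzK ⟨_, hmem, ?_⟩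
    refine Prod.ext rfl (Prod.ext (funext fun j => ?_) rfl)
    simp [insertPt]

/-- Lemma 4.7 of the paper: fiber integration along the projection
`P(x,η,ξ) = (x,η)` is well defined from `S_{r,c}(Ω_V^U)` to `S_{r,c}(Ω_V^{U'})`, where
`U' = P(U)` (which is open); in particular the integral converges at every point of
`Ω_V^{U'}`, and `P̃_{r,c}(F)` is smooth, has conic compact support and satisfies `(s1)`. -/
theorem stmt1 {p q : ℕ} (U : Set ((Fin p → ℝ) × (Fin (q + q) → ℝ))) (hU : IsOpen U)
    (hV : ∀ x : Fin p → ℝ, (x, (0 : Fin q → ℝ)) ∈ Pmap '' U →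
      (x, (0 : Fin (q + q) → ℝ)) ∈ U)
    (F : Pt p (q + q) → ℂ) (hF : MemSrc U F) :
    IsOpen (Pmap '' U) ∧
    (∀ z ∈ Omega (Pmap '' U),
      IntegrableOn (fun ξ : Fin q → ℝ => F (z.1, Fin.append z.2.1 ξ, z.2.2))
        {ξ : Fin q → ℝ | (z.1, z.2.2 • Fin.append z.2.1 ξ) ∈ U}) ∧
    MemSrc (Pmap '' U) (PtildeInt U F) := by
  have hdec := dec_indicator hU hF
  have hopen : IsOpen (Pmap '' U) := isOpenMap_Pmap p q U hU
  have heq : EqOn (PtildeInt U F) (fiberInt ((Omega U).indicator F))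
      (slab p q ∩ cone (Pmap '' U)) := (PtildeInt_eq hU F).mono inter_subset_left
  refine ⟨hopen, fun z hz => ?_, ?_, hasConicSupport_PtildeInt hF.2.1, fun k m l α => ?_⟩
  · have hm : MeasurableSet {ξ : Fin q → ℝ | (z.1, z.2.2 • Fin.append z.2.1 ξ) ∈ U} :=
      ((isOpen_cone hU).preimage (continuous_insertPt z)).measurableSet
    refine (hdec.integrable (z := z) hz.1).integrableOn.congr_fun (fun ξ hξ => ?_) hm
    exact indicator_of_mem (s := Omega U) (a := insertPt z ξ) ⟨hz.1, hξ⟩ F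
  · exact (hdec.contDiffOn_fiberInt.mono inter_subset_left).congr heq
  · obtain ⟨C, hC⟩ := hdec.dec_fiberInt.decay (canon l α m) k
    refine ⟨max C 1, by positivity, fun z hz => le_max_of_le_left ?_⟩
    rw [mixedD_eq_mders, Omega_eq, mders_inter (isOpen_cone hopen) _ heq hz]
    exact hC z hz.1
end
end

section
/- Let B_n be the set of functions f : ℝ^n × ℝ^n × [0,1] → ℂ that are C^∞ on ℝ^n × ℝ^n × [0,1] (derivatives one-sided in t at t = 0, 1), for which there exists a compact set K ⊆ ℝ^n × ℝ^n × [0,1] with K ∩ (ℝ^n × ℝ^n × {0}) ⊆ ℝ^n × {0} × {0} such that f(x,ξ,t) = 0 whenever t ≠ 0 and (x, tξ, t) ∉ K, and such that for all k, m ∈ ℕ, l ∈ ℕ^n, α ∈ ℕ^n there is C > 0 with (1 + ‖ξ‖²)^k · |∂_x^l ∂_ξ^α ∂_t^m f(x,ξ,t)| ≤ C. Then for all f, g ∈ B_n the function (f ⋆ g)(x,ξ,t) = ∫_{ℝ^n} f(x, η, t)·g(x + tη, ξ − η, t) dη is well defined and belongs to B_n. -/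
/-!
Differentiating `∫ f(x,η,t) g(x+tη, ξ-η, t) dη` under the integral sign gives integrals of the same
kind, except that the `t`-derivative of the argument `x + tη` brings out factors `η_i`. The proof
therefore works with the weighted convolutions `wconv p f g z = ∫ p(η) f(x,η,t) g(x+tη, ξ-η, t) dη`,
where `p` is a continuous weight of polynomial growth:

* `f` decays rapidly in `η`, uniformly in `(x,t)`, so it absorbs the weight; and Peetre's inequality
  `1 + ‖ξ‖² ≤ 2 (1 + ‖η‖²)(1 + ‖ξ-η‖²)` distributes powers of `1 + ‖ξ‖²` over the two factors. The
  integrand and its `z`-derivative thus have integrable bounds uniform in `z` (`dominated`), which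
  gives integrability, rapid decay (`decay_wconv`) and differentiability on the slab
  (`hasFDerivWithinAt_integral`, `hasFDerivWithinAt_wconv`).
* By Leibniz' rule (`mder_wconv`), finite sums of weighted convolutions (`ConvSpan`) are closed
  under all directional derivatives. Each of them is differentiable and decays rapidly, so by
  induction all of them are smooth with rapidly decaying derivatives.

The decay hypothesis only concerns the sorted derivatives `∂_x^l ∂_ξ^α ∂_t^m`; since derivatives of
smooth functions commute on the slab, it extends to all iterated directional derivatives
(`MemSrc.schwartzSlab`). The support condition is a compactness argument: a nonzero integrand at
`(x,ξ,t)` with `t ≠ 0` splits `tξ` as `a + b` with `(x,a,t)` and `(x+a,b,t)` in the supports of `f`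
and `g` (`hasConicSupport_bconv`).
-/

open Set MeasureTheory

noncomputable section

/-- The convolution product of Connes' tangent groupoid of `ℝ^n` in the global chart
`(x,y,t) ↦ (x,(y−x)/t,t)`: `(f ⋆ g)(x,ξ,t) = ∫_{ℝ^n} f(x,η,t)·g(x+tη, ξ−η, t) dη`. -/
noncomputable def bconv {n : ℕ} (f g : Pt n n → ℂ) : Pt n n → ℂ :=
  fun z => ∫ η : Fin n → ℝ, f (z.1, η, z.2.2) * g (z.1 + z.2.2 • η, z.2.1 - η, z.2.2)

/-! ### The slab `ℝ^n × ℝ^n × [0,1]` and commuting directional derivatives -/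

/-- The slab `ℝ^n × ℝ^n × [0,1]`, the common domain of all functions considered. -/
abbrev Slab (n : ℕ) : Set (Pt n n) := Omega (univ : Set ((Fin n → ℝ) × (Fin n → ℝ)))

lemma mem_slab {n : ℕ} {z : Pt n n} : z ∈ Slab n ↔ z.2.2 ∈ Icc (0 : ℝ) 1 :=
  ⟨fun h => h.1, fun h => ⟨h, mem_univ _⟩⟩

lemma slab_eq (n : ℕ) : Slab n = univ ×ˢ (univ ×ˢ Icc (0 : ℝ) 1) := by
  ext z
  rw [mem_slab]
  simp

lemma convex_slab_s6 (n : ℕ) : Convex ℝ (Slab n) := by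
  rw [slab_eq]
  exact convex_univ.prod (convex_univ.prod (convex_Icc _ _))

lemma isClosed_slab (n : ℕ) : IsClosed (Slab n) := by
  rw [slab_eq]
  exact isClosed_univ.prod (isClosed_univ.prod isClosed_Icc)

lemma interior_slab_nonempty_s6 (n : ℕ) : (interior (Slab n)).Nonempty := by
  rw [slab_eq, interior_prod_eq, interior_prod_eq, interior_Icc, interior_univ]
  exact ⟨(0, 0, 1 / 2), mem_univ _, mem_univ _, by norm_num⟩

lemma uniqueDiffOn_slab_s6 (n : ℕ) : UniqueDiffOn ℝ (Slab n) :=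
  uniqueDiffOn_convex (convex_slab_s6 n) (interior_slab_nonempty_s6 n)

lemma slab_subset_closure_interior_s6 (n : ℕ) : Slab n ⊆ closure (interior (Slab n)) := by
  rw [(convex_slab_s6 n).closure_interior_eq_closure_of_nonempty_interior (interior_slab_nonempty_s6 n)]
  exact subset_closure

/-- Off the closed slab the derivative within the slab is `0`, so `mder` only depends on the
restriction of the function to the slab, as an equality of functions on the whole space. -/
lemma mder_congr_s6 {n : ℕ} {a b : Pt n n → ℂ} (h : EqOn a b (Slab n)) (v : Pt n n) :
    mder (Slab n) v a = mder (Slab n) v b := by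
  funext z
  by_cases hz : z ∈ Slab n
  · simp only [mder, fderivWithin_congr h (h hz)]
  · have hzc : z ∉ closure (Slab n) := by rwa [(isClosed_slab n).closure_eq]
    simp only [mder, fderivWithin_zero_of_notMem_closure hzc]

/-- Smoothness on the slab, with one-sided derivatives at `t = 0` and `t = 1`. -/
abbrev SmoothOnSlab {n : ℕ} (f : Pt n n → ℂ) : Prop := ContDiffOn ℝ (⊤ : ℕ∞) f (Slab n)

lemma SmoothOnSlab.contDiffOn_fderivWithin {n : ℕ} {f : Pt n n → ℂ} (hf : SmoothOnSlab f) :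
    ContDiffOn ℝ (⊤ : ℕ∞) (fderivWithin ℝ f (Slab n)) (Slab n) :=
  ContDiffOn.fderivWithin hf (uniqueDiffOn_slab_s6 n) (by simp)

lemma SmoothOnSlab.smooth_mder {n : ℕ} {f : Pt n n → ℂ} (hf : SmoothOnSlab f) (v : Pt n n) :
    SmoothOnSlab (mder (Slab n) v f) :=
  hf.contDiffOn_fderivWithin.clm_apply contDiffOn_const

lemma SmoothOnSlab.hasFDerivWithinAt {n : ℕ} {f : Pt n n → ℂ} (hf : SmoothOnSlab f)
    {z : Pt n n} (hz : z ∈ Slab n) :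
    HasFDerivWithinAt f (fderivWithin ℝ f (Slab n) z) (Slab n) z :=
  ((hf z hz).differentiableWithinAt (by simp)).hasFDerivWithinAt

lemma SmoothOnSlab.mder_comm {n : ℕ} {f : Pt n n → ℂ} (hf : SmoothOnSlab f) (v w : Pt n n) :
    mder (Slab n) v (mder (Slab n) w f)
      = mder (Slab n) w (mder (Slab n) v f) := by
  funext z
  by_cases hz : z ∈ Slab n
  · have key : ∀ a b : Pt n n, mder (Slab n) a (mder (Slab n) b f) z
        = fderivWithin ℝ (fderivWithin ℝ f (Slab n)) (Slab n) z a b := by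
      intro a b
      have h1 : HasFDerivWithinAt (fderivWithin ℝ f (Slab n)) _ (Slab n) z :=
        ((hf.contDiffOn_fderivWithin z hz).differentiableWithinAt (by simp)).hasFDerivWithinAt
      have h2 := h1.clm_apply (hasFDerivWithinAt_const b z (Slab n))
      have h3 := h2.fderivWithin (uniqueDiffOn_slab_s6 n z hz)
      change fderivWithin ℝ (fun y => fderivWithin ℝ f (Slab n) y b) (Slab n) z a = _
      rw [h3]
      simp
    rw [key, key]
    exact (hf z hz).isSymmSndFDerivWithinAt (by simpa using WithTop.coe_le_coe.2 (le_top : (2 : ℕ∞) ≤ ⊤)) (uniqueDiffOn_slab_s6 n)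
      (slab_subset_closure_interior_s6 n hz) hz v w
  · have hzc : z ∉ closure (Slab n) := by rwa [(isClosed_slab n).closure_eq]
    simp only [mder, fderivWithin_zero_of_notMem_closure hzc]
    simp

/-- The iterated directional derivative `∂_{v₁} ⋯ ∂_{v_r} f` along the word `L = [v₁, …, v_r]`. -/
def wordD {n : ℕ} (L : List (Pt n n)) (f : Pt n n → ℂ) : Pt n n → ℂ :=
  L.foldr (mder (Slab n)) f

lemma wordD_append {n : ℕ} (L L' : List (Pt n n)) (f : Pt n n → ℂ) :
    wordD (L ++ L') f = wordD L (wordD L' f) := by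
  simp [wordD, List.foldr_append]

lemma SmoothOnSlab.smooth_wordD {n : ℕ} {f : Pt n n → ℂ} (hf : SmoothOnSlab f) (L : List (Pt n n)) :
    SmoothOnSlab (wordD L f) := by
  induction L with
  | nil => exact hf
  | cons v L ih => exact ih.smooth_mder v

lemma wordD_perm {n : ℕ} {f : Pt n n → ℂ} (hf : SmoothOnSlab f) {L L' : List (Pt n n)}
    (h : L.Perm L') : wordD L f = wordD L' f := by
  induction h with
  | nil => rfl
  | cons v _ ih => exact congrArg (mder (Slab n) v) ih
  | swap v w L => exact (hf.smooth_wordD L).mder_comm w v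
  | trans _ _ h1 h2 => exact h1.trans h2

lemma wordD_replicate {n : ℕ} (m : ℕ) (v : Pt n n) (f : Pt n n → ℂ) :
    wordD (List.replicate m v) f = (mder (Slab n) v)^[m] f := by
  induction m with
  | zero => rfl
  | succ m ih =>
    rw [Function.iterate_succ_apply', ← ih]
    rfl

lemma wordD_flatten {n : ℕ} {r : ℕ} (k : Fin r → ℕ) (e : Fin r → Pt n n) (f : Pt n n → ℂ) :
    wordD (List.ofFn fun i => List.replicate (k i) (e i)).flatten f
      = (List.ofFn fun i => (mder (Slab n) (e i))^[k i]).foldr (· ∘ ·) id f := by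
  induction r with
  | zero => rfl
  | succ r ih =>
    rw [List.ofFn_succ, List.ofFn_succ, List.flatten_cons, wordD_append, List.foldr_cons, ih,
      wordD_replicate]
    rfl

/-- The sorted word of coordinate directions whose iterated derivative is `∂_x^l ∂_ξ^α ∂_t^m`. -/
def mixedWord {n : ℕ} (l α : Fin n → ℕ) (m : ℕ) : List (Pt n n) :=
  (List.ofFn fun i => List.replicate (l i) (ex i)).flatten ++
    ((List.ofFn fun j => List.replicate (α j) (efib j)).flatten ++ List.replicate m et)

lemma mixedD_eq_wordD {n : ℕ} (l α : Fin n → ℕ) (m : ℕ) (f : Pt n n → ℂ) :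
    mixedD (Slab n) l α m f = wordD (mixedWord l α m) f := by
  rw [mixedWord, wordD_append, wordD_append, wordD_flatten, wordD_flatten, wordD_replicate]
  rfl

lemma coe_flatten_replicate {β : Type*} {r : ℕ} (k : Fin r → ℕ) (e : Fin r → β) :
    ((List.ofFn fun i => List.replicate (k i) (e i)).flatten : Multiset β)
      = ∑ i, k i • ({e i} : Multiset β) := by
  induction r with
  | zero => rfl
  | succ r ih =>
    rw [List.ofFn_succ, List.flatten_cons, ← Multiset.coe_add, ih, Fin.sum_univ_succ,
      Multiset.nsmul_singleton, Multiset.coe_replicate]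

lemma coe_mixedWord {n : ℕ} (l α : Fin n → ℕ) (m : ℕ) :
    (mixedWord l α m : Multiset (Pt n n))
      = ∑ i, l i • ({ex i} : Multiset (Pt n n)) + (∑ j, α j • {efib j} + m • {et}) := by
  rw [mixedWord, ← Multiset.coe_add, ← Multiset.coe_add, coe_flatten_replicate,
    coe_flatten_replicate, Multiset.nsmul_singleton et m, Multiset.coe_replicate]

/-- The coordinate directions. -/
def IsCoord {n : ℕ} (v : Pt n n) : Prop := (∃ i, v = ex i) ∨ (∃ j, v = efib j) ∨ v = et

lemma sum_add_single {β : Type*} {r : ℕ} (k : Fin r → ℕ) (e : Fin r → β) (i : Fin r) :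
    ∑ j, (k + Pi.single i 1 : Fin r → ℕ) j • ({e j} : Multiset β) = {e i} + ∑ j, k j • ({e j} : Multiset β) := by
  simp only [Pi.add_apply, add_smul, Finset.sum_add_distrib]
  rw [add_comm, Finset.sum_eq_single i]
  · simp
  · intro j _ hj
    simp [hj]
  · simp

lemma exists_perm_mixedWord {n : ℕ} (L : List (Pt n n)) (hL : ∀ v ∈ L, IsCoord v) :
    ∃ l α m, L.Perm (mixedWord l α m) := by
  induction L with
  | nil =>
    refine ⟨0, 0, 0, ?_⟩
    rw [← Multiset.coe_eq_coe, coe_mixedWord]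
    simp
  | cons v L ih =>
    obtain ⟨l, α, m, h⟩ := ih fun w hw => hL w (List.mem_cons_of_mem _ hw)
    rw [← Multiset.coe_eq_coe, coe_mixedWord] at h
    rcases hL v List.mem_cons_self with ⟨i, rfl⟩ | ⟨j, rfl⟩ | rfl
    · refine ⟨l + Pi.single i 1, α, m, ?_⟩
      rw [← Multiset.coe_eq_coe, coe_mixedWord, ← Multiset.cons_coe, h, sum_add_single,
        ← Multiset.singleton_add]
      abel
    · refine ⟨l, α + Pi.single j 1, m, ?_⟩
      rw [← Multiset.coe_eq_coe, coe_mixedWord, ← Multiset.cons_coe, h, sum_add_single,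
        ← Multiset.singleton_add]
      abel
    · refine ⟨l, α, m + 1, ?_⟩
      rw [← Multiset.coe_eq_coe, coe_mixedWord, ← Multiset.cons_coe, h, add_smul, one_smul,
        ← Multiset.singleton_add]
      abel

lemma coord_decomp {n : ℕ} (v : Pt n n) :
    v = ∑ i, v.1 i • ex i + (∑ j, v.2.1 j • efib j + v.2.2 • et) := by
  refine Prod.ext ?_ (Prod.ext ?_ ?_)
  · funext k
    simp [ex, efib, et, Prod.fst_sum, Finset.sum_apply, Pi.single_apply]
  · funext k
    simp [ex, efib, et, Prod.fst_sum, Prod.snd_sum, Finset.sum_apply, Pi.single_apply]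
  · simp [ex, efib, et, Prod.snd_sum]

lemma clm_coord_decomp {n : ℕ} {F : Type*} [NormedAddCommGroup F] [NormedSpace ℝ F]
    (A : Pt n n →L[ℝ] F) (v : Pt n n) :
    A v = ∑ i, v.1 i • A (ex i) + (∑ j, v.2.1 j • A (efib j) + v.2.2 • A et) := by
  conv_lhs => rw [coord_decomp v]
  simp only [map_add, map_sum, map_smul]

/-! ### Uniformly rapidly decaying functions -/

/-- `‖f(x,ξ,t)‖` is bounded on the slab by every negative power of `1 + ‖ξ‖²`. -/
def DecayOnSlab {n : ℕ} {F : Type*} [NormedAddCommGroup F] (f : Pt n n → F) : Prop :=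
  ∀ k : ℕ, ∃ C, 0 ≤ C ∧ ∀ z ∈ Slab n, (1 + ‖z.2.1‖ ^ 2) ^ k * ‖f z‖ ≤ C

lemma DecayOnSlab.of_norm_le_sum {n : ℕ} {F G ι : Type*} [NormedAddCommGroup F]
    [NormedAddCommGroup G] {f : Pt n n → F} {s : Finset ι} {c : ι → ℝ} {a : ι → Pt n n → G}
    (hc : ∀ i ∈ s, 0 ≤ c i) (ha : ∀ i ∈ s, DecayOnSlab (a i))
    (h : ∀ z ∈ Slab n, ‖f z‖ ≤ ∑ i ∈ s, c i * ‖a i z‖) : DecayOnSlab f := by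
  classical
  intro k
  have : ∀ i, ∃ C, 0 ≤ C ∧ (i ∈ s → ∀ z ∈ Slab n, (1 + ‖z.2.1‖ ^ 2) ^ k * ‖a i z‖ ≤ C) := by
    intro i
    by_cases hi : i ∈ s
    · obtain ⟨C, hC0, hC⟩ := ha i hi k
      exact ⟨C, hC0, fun _ => hC⟩
    · exact ⟨0, le_rfl, fun h => absurd h hi⟩
  choose C hC0 hC using this
  refine ⟨∑ i ∈ s, c i * C i, Finset.sum_nonneg fun i hi => mul_nonneg (hc i hi) (hC0 i), ?_⟩
  intro z hz
  calc (1 + ‖z.2.1‖ ^ 2) ^ k * ‖f z‖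
      ≤ (1 + ‖z.2.1‖ ^ 2) ^ k * ∑ i ∈ s, c i * ‖a i z‖ := by gcongr; exact h z hz
    _ = ∑ i ∈ s, c i * ((1 + ‖z.2.1‖ ^ 2) ^ k * ‖a i z‖) := by
        rw [Finset.mul_sum]
        exact Finset.sum_congr rfl fun i _ => by ring
    _ ≤ ∑ i ∈ s, c i * C i :=
        Finset.sum_le_sum fun i hi => mul_le_mul_of_nonneg_left (hC i hi z hz) (hc i hi)

/-- The coordinate directions as one family, indexed by the `x`-, `ξ`- and `t`-coordinates. -/
def coordDir {n : ℕ} : Fin n ⊕ Fin n ⊕ Unit → Pt n n :=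
  Sum.elim ex (Sum.elim efib fun _ => et)

lemma isCoord_coordDir {n : ℕ} (i : Fin n ⊕ Fin n ⊕ Unit) : IsCoord (coordDir i) := by
  rcases i with i | j | _
  · exact Or.inl ⟨i, rfl⟩
  · exact Or.inr (Or.inl ⟨j, rfl⟩)
  · exact Or.inr (Or.inr rfl)

lemma norm_clm_apply_le {n : ℕ} {F : Type*} [NormedAddCommGroup F] [NormedSpace ℝ F]
    (A : Pt n n →L[ℝ] F) (v : Pt n n) : ‖A v‖ ≤ ∑ i, ‖v‖ * ‖A (coordDir i)‖ := by
  rw [clm_coord_decomp A v, Fintype.sum_sum_type, Fintype.sum_sum_type]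
  have h1 : ∀ i, ‖v.1 i‖ ≤ ‖v‖ := fun i => (norm_le_pi_norm v.1 i).trans (norm_fst_le v)
  have h2 : ∀ i, ‖v.2.1 i‖ ≤ ‖v‖ := fun i =>
    (norm_le_pi_norm v.2.1 i).trans ((norm_fst_le v.2).trans (norm_snd_le v))
  have h3 : ‖v.2.2‖ ≤ ‖v‖ := (norm_snd_le v.2).trans (norm_snd_le v)
  refine (norm_add_le _ _).trans (add_le_add ?_ ((norm_add_le _ _).trans (add_le_add ?_ ?_)))
  · refine norm_sum_le_of_le _ fun i _ => ?_
    rw [norm_smul]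
    exact mul_le_mul_of_nonneg_right (h1 i) (norm_nonneg _)
  · refine norm_sum_le_of_le _ fun i _ => ?_
    rw [norm_smul]
    exact mul_le_mul_of_nonneg_right (h2 i) (norm_nonneg _)
  · rw [norm_smul]
    simpa [coordDir] using mul_le_mul_of_nonneg_right h3 (norm_nonneg (A et))

/-- Smooth functions on the slab all of whose iterated directional derivatives, along arbitrary
words of directions, decay rapidly in `ξ`, uniformly in `(x,t)`. -/
def SchwartzSlab {n : ℕ} (f : Pt n n → ℂ) : Prop :=
  SmoothOnSlab f ∧ ∀ L : List (Pt n n), DecayOnSlab (wordD L f)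

lemma SchwartzSlab.schwartz_mder {n : ℕ} {f : Pt n n → ℂ} (hf : SchwartzSlab f)
    (v : Pt n n) : SchwartzSlab (mder (Slab n) v f) :=
  ⟨hf.1.smooth_mder v, fun L => by simpa [wordD] using hf.2 (L ++ [v])⟩

lemma SchwartzSlab.decay_fderivWithin {n : ℕ} {f : Pt n n → ℂ} (hf : SchwartzSlab f) :
    DecayOnSlab (fderivWithin ℝ f (Slab n)) := by
  refine DecayOnSlab.of_norm_le_sum (s := Finset.univ) (c := fun _ => 1)
    (a := fun i => mder (Slab n) (coordDir i) f) (fun _ _ => zero_le_one)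
    (fun i _ => hf.2 [coordDir i]) ?_
  intro z _
  refine ContinuousLinearMap.opNorm_le_bound _
    (Finset.sum_nonneg fun i _ => mul_nonneg zero_le_one (norm_nonneg _)) fun v => ?_
  refine (norm_clm_apply_le _ v).trans (le_of_eq ?_)
  rw [Finset.sum_mul]
  exact Finset.sum_congr rfl fun i _ => by rw [one_mul, mul_comm]; rfl

/-- Decay of the mixed partial derivatives gives decay of all iterated directional derivatives:
the first letter of a word is expanded in coordinate directions, which are then commuted to the
end of the word; a word of coordinate directions can be sorted. -/
lemma MemSrc.schwartzSlab {n : ℕ} {f : Pt n n → ℂ}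
    (hf : MemSrc (univ : Set ((Fin n → ℝ) × (Fin n → ℝ))) f) : SchwartzSlab f := by
  have hs : SmoothOnSlab f := hf.1
  refine ⟨hs, ?_⟩
  have key : ∀ L L' : List (Pt n n), (∀ v ∈ L', IsCoord v) → DecayOnSlab (wordD (L ++ L') f) := by
    intro L
    induction L with
    | nil =>
      intro L' hL' k
      obtain ⟨l, α, m, hp⟩ := exists_perm_mixedWord L' hL'
      obtain ⟨C, hC0, hC⟩ := hf.2.2 k m l α
      refine ⟨C, hC0.le, fun z hz => ?_⟩
      rw [List.nil_append, wordD_perm hs hp, ← mixedD_eq_wordD]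
      exact hC z hz
    | cons v L ih =>
      intro L' hL'
      refine DecayOnSlab.of_norm_le_sum (s := Finset.univ) (c := fun _ => ‖v‖)
        (a := fun i => wordD (L ++ coordDir i :: L') f) (fun _ _ => norm_nonneg _)
        (fun i _ => ih _ ?_) ?_
      · intro w hw
        rcases List.mem_cons.1 hw with rfl | hw
        · exact isCoord_coordDir i
        · exact hL' w hw
      · intro z _
        refine (norm_clm_apply_le _ v).trans (le_of_eq (Finset.sum_congr rfl fun i _ => ?_))
        rw [wordD_perm hs List.perm_middle]
        rfl
  intro L
  simpa using key L [] (by simp)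

/-- `1 + ‖ξ‖² ≤ 2 (1 + ‖η‖²)(1 + ‖ξ - η‖²)`. -/
lemma peetre {n : ℕ} (ξ η : Fin n → ℝ) :
    1 + ‖ξ‖ ^ 2 ≤ 2 * ((1 + ‖η‖ ^ 2) * (1 + ‖ξ - η‖ ^ 2)) := by
  have h : ‖ξ‖ ≤ ‖η‖ + ‖ξ - η‖ := by simpa using norm_add_le η (ξ - η)
  have h2 : ‖ξ‖ ^ 2 ≤ (‖η‖ + ‖ξ - η‖) ^ 2 := by gcongr
  nlinarith [sq_nonneg (‖η‖ - ‖ξ - η‖), mul_nonneg (sq_nonneg ‖η‖) (sq_nonneg ‖ξ - η‖)]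

lemma integrable_inv_pow (n : ℕ) :
    Integrable (fun η : Fin n → ℝ => ((1 + ‖η‖ ^ 2) ^ (n + 1))⁻¹) := by
  have h := integrable_rpow_neg_one_add_norm_sq (E := Fin n → ℝ) (μ := volume)
    (r := 2 * ((n + 1 : ℕ) : ℝ)) (by simp; linarith)
  refine h.congr (Filter.Eventually.of_forall fun η => ?_)
  have hp : 0 ≤ 1 + ‖η‖ ^ 2 := by positivity
  have he : -(2 * ((n + 1 : ℕ) : ℝ)) / 2 = -((n + 1 : ℕ) : ℝ) := by ring
  simp only [he, Real.rpow_neg hp, Real.rpow_natCast]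

/-! ### Differentiation under the integral sign on a convex set -/

/-- Differentiation under the integral sign within a convex set `s`, where the derivatives within
`s` have a common integrable bound. No neighbourhood of the base point is needed: the mean value
inequality on `s` bounds the difference quotients. -/
lemma hasFDerivWithinAt_integral_s6 {α H E : Type*} [MeasurableSpace α] {μ : Measure α}
    [NormedAddCommGroup H] [NormedSpace ℝ H] [NormedAddCommGroup E] [NormedSpace ℝ E]
    [CompleteSpace E] {F : H → α → E} {F' : H → α → H →L[ℝ] E} {s : Set H} {x₀ : H}
    {bound : α → ℝ} (hs : Convex ℝ s) (hx₀ : x₀ ∈ s)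
    (hF_int : ∀ x ∈ s, Integrable (F x) μ) (hF'_int : Integrable (F' x₀) μ)
    (hF'_le : ∀ x ∈ s, ∀ a, ‖F' x a‖ ≤ bound a) (hbound : Integrable bound μ)
    (hdiff : ∀ x ∈ s, ∀ a, HasFDerivWithinAt (F · a) (F' x a) s x) :
    HasFDerivWithinAt (fun x => ∫ a, F x a ∂μ) (∫ a, F' x₀ a ∂μ) s x₀ := by
  have hlip : ∀ x ∈ s, ∀ a, ‖F x a - F x₀ a‖ ≤ bound a * ‖x - x₀‖ := fun x hx a =>
    hs.norm_image_sub_le_of_norm_hasFDerivWithin_le (fun y hy => hdiff y hy a)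
      (fun y hy => hF'_le y hy a) hx₀ hx
  have hmem : ∀ᶠ x in nhdsWithin x₀ s, x ∈ s := self_mem_nhdsWithin
  have heq : ∀ᶠ x in nhdsWithin x₀ s,
      ‖x - x₀‖⁻¹ * ‖((∫ a, F x a ∂μ) - ∫ a, F x₀ a ∂μ) - (∫ a, F' x₀ a ∂μ) (x - x₀)‖ =
      ‖∫ a, ‖x - x₀‖⁻¹ • (F x a - F x₀ a - F' x₀ a (x - x₀)) ∂μ‖ := by
    filter_upwards [hmem] with x hx
    rw [← norm_smul_of_nonneg (inv_nonneg.2 (norm_nonneg _)), integral_smul, integral_sub,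
      integral_sub, ← ContinuousLinearMap.integral_apply hF'_int]
    exacts [hF_int x hx, hF_int x₀ hx₀, (hF_int x hx).sub (hF_int x₀ hx₀),
      hF'_int.apply_continuousLinearMap _]
  rw [hasFDerivWithinAt_iff_tendsto, Filter.tendsto_congr' heq,
    ← tendsto_zero_iff_norm_tendsto_zero,
    show (0 : E) = ∫ _, (0 : E) ∂μ by simp]
  refine tendsto_integral_filter_of_dominated_convergence (fun a => 2 * bound a) ?_ ?_
    (hbound.const_mul 2) ?_
  · filter_upwards [hmem] with x hx
    exact ((((hF_int x hx).sub (hF_int x₀ hx₀)).sub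
      (hF'_int.apply_continuousLinearMap _)).smul _).aestronglyMeasurable
  · filter_upwards [hmem] with x hx
    refine Filter.Eventually.of_forall fun a => ?_
    have hb : 0 ≤ bound a := (norm_nonneg _).trans (hF'_le x₀ hx₀ a)
    have h1 : ‖F x a - F x₀ a - F' x₀ a (x - x₀)‖ ≤ 2 * bound a * ‖x - x₀‖ := by
      refine (norm_sub_le _ _).trans ?_
      have h2 := (F' x₀ a).le_of_opNorm_le (hF'_le x₀ hx₀ a) (x - x₀)
      linarith [hlip x hx a]
    rw [norm_smul, norm_inv, norm_norm]
    rcases (norm_nonneg (x - x₀)).eq_or_lt with h0 | h0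
    · rw [← h0]
      simpa using hb
    · rw [inv_mul_le_iff₀ h0, mul_comm]
      exact h1
  · refine Filter.Eventually.of_forall fun a => ?_
    have h := hdiff x₀ hx₀ a
    rw [hasFDerivWithinAt_iff_tendsto] at h
    rw [tendsto_zero_iff_norm_tendsto_zero]
    refine h.congr fun x => ?_
    rw [norm_smul, norm_inv, norm_norm]

/-! ### Weighted convolutions -/

/-- Continuous weights of polynomial growth. -/
def PolyWeight {n : ℕ} (p : (Fin n → ℝ) → ℝ) : Prop :=
  Continuous p ∧ ∃ (N : ℕ) (C : ℝ), 0 ≤ C ∧ ∀ η, ‖p η‖ ≤ C * (1 + ‖η‖ ^ 2) ^ N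

lemma PolyWeight.mul {n : ℕ} {p q : (Fin n → ℝ) → ℝ} (hp : PolyWeight p) (hq : PolyWeight q) :
    PolyWeight fun η => p η * q η := by
  obtain ⟨hpc, N, C, hC, hN⟩ := hp
  obtain ⟨hqc, M, D, hD, hM⟩ := hq
  refine ⟨hpc.mul hqc, N + M, C * D, by positivity, fun η => ?_⟩
  rw [norm_mul]
  calc ‖p η‖ * ‖q η‖ ≤ (C * (1 + ‖η‖ ^ 2) ^ N) * (D * (1 + ‖η‖ ^ 2) ^ M) :=
        mul_le_mul (hN η) (hM η) (norm_nonneg _) (by positivity)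
    _ = C * D * (1 + ‖η‖ ^ 2) ^ (N + M) := by ring

lemma polyWeight_const {n : ℕ} (c : ℝ) : PolyWeight fun _ : Fin n → ℝ => c :=
  ⟨continuous_const, 0, ‖c‖, norm_nonneg _, fun η => by simp⟩

lemma polyWeight_coord {n : ℕ} (i : Fin n) : PolyWeight fun η : Fin n → ℝ => η i := by
  refine ⟨continuous_apply i, 1, 1, zero_le_one, fun η => ?_⟩
  have := norm_le_pi_norm η i
  nlinarith [sq_nonneg (‖η‖ - 1)]

lemma polyWeight_japanese {n : ℕ} : PolyWeight fun η : Fin n → ℝ => 2 * (1 + ‖η‖ ^ 2) := by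
  refine ⟨by fun_prop, 1, 2, zero_le_two, fun η => ?_⟩
  rw [Real.norm_of_nonneg (by positivity), pow_one]

/-- The argument `(x, η, t)` of the left factor in the convolution at `z = (x, ξ, t)`. -/
def leftArg {n : ℕ} (z : Pt n n) (η : Fin n → ℝ) : Pt n n := (z.1, η, z.2.2)

/-- The argument `(x + tη, ξ - η, t)` of the right factor in the convolution at `z = (x, ξ, t)`. -/
def rightArg {n : ℕ} (z : Pt n n) (η : Fin n → ℝ) : Pt n n :=
  (z.1 + z.2.2 • η, z.2.1 - η, z.2.2)

lemma leftArg_mem {n : ℕ} {z : Pt n n} (hz : z ∈ Slab n) (η : Fin n → ℝ) :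
    leftArg z η ∈ Slab n := mem_slab.2 (mem_slab.1 hz)

lemma rightArg_mem {n : ℕ} {z : Pt n n} (hz : z ∈ Slab n) (η : Fin n → ℝ) :
    rightArg z η ∈ Slab n := mem_slab.2 (mem_slab.1 hz)

lemma continuous_leftArg {n : ℕ} (z : Pt n n) : Continuous (leftArg z) := by
  unfold leftArg
  fun_prop

lemma continuous_rightArg {n : ℕ} (z : Pt n n) : Continuous (rightArg z) := by
  unfold rightArg
  fun_prop

/-- The derivative of `z ↦ leftArg z η`. -/
def leftD (n : ℕ) : Pt n n →L[ℝ] Pt n n :=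
  (ContinuousLinearMap.fst ℝ _ _).prod
    ((0 : Pt n n →L[ℝ] Fin n → ℝ).prod
      ((ContinuousLinearMap.snd ℝ _ _).comp (ContinuousLinearMap.snd ℝ _ _)))

/-- The derivative of `z ↦ rightArg z η`, written as `v ↦ v + v_t • (η, 0, 0)`. -/
def rightD {n : ℕ} (η : Fin n → ℝ) : Pt n n →L[ℝ] Pt n n :=
  ContinuousLinearMap.id ℝ _ +
    ContinuousLinearMap.smulRightL ℝ (Pt n n) (Pt n n)
      ((ContinuousLinearMap.snd ℝ _ _).comp (ContinuousLinearMap.snd ℝ _ _)) (η, 0, 0)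

lemma leftD_apply {n : ℕ} (v : Pt n n) : leftD n v = (v.1, 0, v.2.2) := rfl

lemma rightD_apply {n : ℕ} (η : Fin n → ℝ) (v : Pt n n) :
    rightD η v = v + v.2.2 • ((η, 0, 0) : Pt n n) := rfl

lemma continuous_rightD {n : ℕ} : Continuous (rightD : (Fin n → ℝ) → Pt n n →L[ℝ] Pt n n) := by
  unfold rightD
  fun_prop

lemma hasFDerivAt_leftArg {n : ℕ} (z : Pt n n) (η : Fin n → ℝ) :
    HasFDerivAt (fun z => leftArg z η) (leftD n) z := by
  have h := (leftD n).hasFDerivAt (x := z) |>.add_const ((0, η, 0) : Pt n n)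
  have e : (fun z => leftArg z η) = fun y : Pt n n => leftD n y + ((0, η, 0) : Pt n n) := by
    funext y
    simp [leftArg, leftD_apply]
  rw [e]
  exact h

lemma hasFDerivAt_rightArg {n : ℕ} (z : Pt n n) (η : Fin n → ℝ) :
    HasFDerivAt (fun z => rightArg z η) (rightD η) z := by
  have h := (rightD η).hasFDerivAt (x := z) |>.add_const ((0, -η, 0) : Pt n n)
  have e : (fun z => rightArg z η) = fun y : Pt n n => rightD η y + ((0, -η, 0) : Pt n n) := by
    funext y
    simp [rightArg, rightD_apply, Prod.ext_iff, sub_eq_add_neg]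
  rw [e]
  exact h

lemma norm_leftD_le (n : ℕ) : ‖leftD n‖ ≤ 1 := by
  refine ContinuousLinearMap.opNorm_le_bound _ zero_le_one fun v => ?_
  rw [leftD_apply, one_mul]
  refine max_le (norm_fst_le v) (max_le ?_ ((norm_snd_le v.2).trans (norm_snd_le v)))
  simp

lemma norm_rightD_le {n : ℕ} (η : Fin n → ℝ) : ‖rightD η‖ ≤ 2 * (1 + ‖η‖ ^ 2) := by
  refine ContinuousLinearMap.opNorm_le_bound _ (by positivity) fun v => ?_
  have h1 : ‖((η, 0, 0) : Pt n n)‖ = ‖η‖ := by simp [Prod.norm_def]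
  have h2 : ‖v.2.2‖ ≤ ‖v‖ := (norm_snd_le v.2).trans (norm_snd_le v)
  have h3 : ‖rightD η v‖ ≤ ‖v‖ + ‖v‖ * ‖η‖ := by
    rw [rightD_apply]
    refine (norm_add_le _ _).trans ?_
    rw [norm_smul, h1]
    gcongr
  have h4 : ‖η‖ ≤ 1 + 2 * ‖η‖ ^ 2 := by nlinarith [sq_nonneg (‖η‖ - 1), sq_nonneg ‖η‖]
  nlinarith [norm_nonneg v]

/-- The weighted integrand is dominated by an integrable function of `η`, uniformly on the slab,
even after multiplication by a power of `1 + ‖ξ‖²`. -/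
lemma dominated {n : ℕ} {F G : Type*} [NormedAddCommGroup F] [NormedAddCommGroup G]
    {p : (Fin n → ℝ) → ℝ} {a : Pt n n → F} {b : Pt n n → G} (hp : PolyWeight p)
    (ha : DecayOnSlab a) (hb : DecayOnSlab b) (k : ℕ) :
    ∃ C, 0 ≤ C ∧ ∀ z ∈ Slab n, ∀ η, (1 + ‖z.2.1‖ ^ 2) ^ k *
      (‖p η‖ * (‖a (leftArg z η)‖ * ‖b (rightArg z η)‖)) ≤ C * ((1 + ‖η‖ ^ 2) ^ (n + 1))⁻¹ := by
  obtain ⟨-, N, C, hC, hN⟩ := hp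
  -- the extra powers pay for the weight, for Peetre's inequality, and for integrability
  obtain ⟨A, hA0, hA⟩ := ha (k + N + (n + 1))
  obtain ⟨B, hB0, hB⟩ := hb k
  refine ⟨2 ^ k * C * (A * B), by positivity, fun z hz η => ?_⟩
  have h1 := hA _ (leftArg_mem hz η)
  have h2 := hB _ (rightArg_mem hz η)
  change (1 + ‖η‖ ^ 2) ^ (k + N + (n + 1)) * _ ≤ A at h1
  change (1 + ‖z.2.1 - η‖ ^ 2) ^ k * _ ≤ B at h2
  have h3 : (1 + ‖z.2.1‖ ^ 2) ^ k ≤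
      (2 * ((1 + ‖η‖ ^ 2) * (1 + ‖z.2.1 - η‖ ^ 2))) ^ k := by
    gcongr
    exact peetre _ _
  rw [← div_eq_mul_inv, le_div_iff₀ (by positivity)]
  calc (1 + ‖z.2.1‖ ^ 2) ^ k * (‖p η‖ * (‖a (leftArg z η)‖ * ‖b (rightArg z η)‖))
        * (1 + ‖η‖ ^ 2) ^ (n + 1)
      ≤ (2 * ((1 + ‖η‖ ^ 2) * (1 + ‖z.2.1 - η‖ ^ 2))) ^ k *
        ((C * (1 + ‖η‖ ^ 2) ^ N) * (‖a (leftArg z η)‖ * ‖b (rightArg z η)‖))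
        * (1 + ‖η‖ ^ 2) ^ (n + 1) := by
        gcongr
        exact hN η
    _ = 2 ^ k * C * (((1 + ‖η‖ ^ 2) ^ (k + N + (n + 1)) * ‖a (leftArg z η)‖) *
          ((1 + ‖z.2.1 - η‖ ^ 2) ^ k * ‖b (rightArg z η)‖)) := by
        rw [mul_pow, mul_pow]
        ring
    _ ≤ 2 ^ k * C * (A * B) := by gcongr

/-- The integrand `p(η) f(x,η,t) g(x+tη, ξ-η, t)` of the weighted convolution. -/
def integrand {n : ℕ} (p : (Fin n → ℝ) → ℝ) (f g : Pt n n → ℂ) (z : Pt n n) (η : Fin n → ℝ) : ℂ :=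
  p η • (f (leftArg z η) * g (rightArg z η))

/-- The weighted convolution `∫ p(η) f(x,η,t) g(x+tη, ξ-η, t) dη`. -/
def wconv {n : ℕ} (p : (Fin n → ℝ) → ℝ) (f g : Pt n n → ℂ) : Pt n n → ℂ :=
  fun z => ∫ η, integrand p f g z η

lemma continuous_comp_left {n : ℕ} {F : Type*} [TopologicalSpace F] {f : Pt n n → F}
    (hf : ContinuousOn f (Slab n)) {z : Pt n n} (hz : z ∈ Slab n) :
    Continuous fun η => f (leftArg z η) :=
  hf.comp_continuous (continuous_leftArg z) (leftArg_mem hz)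

lemma continuous_comp_right {n : ℕ} {F : Type*} [TopologicalSpace F] {f : Pt n n → F}
    (hf : ContinuousOn f (Slab n)) {z : Pt n n} (hz : z ∈ Slab n) :
    Continuous fun η => f (rightArg z η) :=
  hf.comp_continuous (continuous_rightArg z) (rightArg_mem hz)

lemma SchwartzSlab.decay {n : ℕ} {f : Pt n n → ℂ} (hf : SchwartzSlab f) : DecayOnSlab f :=
  hf.2 []

lemma integrable_integrand {n : ℕ} {p : (Fin n → ℝ) → ℝ} {f g : Pt n n → ℂ} (hp : PolyWeight p)
    (hf : SchwartzSlab f) (hg : SchwartzSlab g) {z : Pt n n} (hz : z ∈ Slab n) :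
    Integrable (integrand p f g z) := by
  obtain ⟨C, -, hC⟩ := dominated hp hf.decay hg.decay 0
  refine ((integrable_inv_pow n).const_mul C).mono' ?_ (Filter.Eventually.of_forall fun η => ?_)
  · exact (hp.1.smul ((continuous_comp_left hf.1.continuousOn hz).mul
      (continuous_comp_right hg.1.continuousOn hz))).aestronglyMeasurable
  · simpa [integrand, norm_smul] using hC z hz η

lemma decay_wconv {n : ℕ} {p : (Fin n → ℝ) → ℝ} {f g : Pt n n → ℂ} (hp : PolyWeight p)
    (hf : SchwartzSlab f) (hg : SchwartzSlab g) : DecayOnSlab (wconv p f g) := by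
  intro k
  obtain ⟨C, hC0, hC⟩ := dominated hp hf.decay hg.decay k
  refine ⟨∫ η : Fin n → ℝ, C * ((1 + ‖η‖ ^ 2) ^ (n + 1))⁻¹,
    integral_nonneg fun η => by positivity, fun z hz => ?_⟩
  have hk : 0 ≤ (1 + ‖z.2.1‖ ^ 2) ^ k := by positivity
  rw [← norm_smul_of_nonneg hk, wconv, ← integral_smul]
  refine norm_integral_le_of_norm_le ((integrable_inv_pow n).const_mul C)
    (Filter.Eventually.of_forall fun η => ?_)
  rw [norm_smul_of_nonneg hk]
  simpa [integrand, norm_smul] using hC z hz η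

/-- The derivative in `z` of the integrand at fixed `η`. -/
def integrandD {n : ℕ} (p : (Fin n → ℝ) → ℝ) (f g : Pt n n → ℂ) (z : Pt n n) (η : Fin n → ℝ) :
    Pt n n →L[ℝ] ℂ :=
  p η • (f (leftArg z η) • (fderivWithin ℝ g (Slab n) (rightArg z η)).comp (rightD η) +
    g (rightArg z η) • (fderivWithin ℝ f (Slab n) (leftArg z η)).comp (leftD n))

lemma hasFDerivWithinAt_integrand {n : ℕ} (p : (Fin n → ℝ) → ℝ) {f g : Pt n n → ℂ}
    (hf : SmoothOnSlab f) (hg : SmoothOnSlab g) {z : Pt n n} (hz : z ∈ Slab n) (η : Fin n → ℝ) :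
    HasFDerivWithinAt (fun z => integrand p f g z η) (integrandD p f g z η) (Slab n) z := by
  have h1 : HasFDerivWithinAt (fun z => f (leftArg z η)) _ (Slab n) z :=
    (hf.hasFDerivWithinAt (leftArg_mem hz η)).comp z
      (hasFDerivAt_leftArg z η).hasFDerivWithinAt fun y hy => leftArg_mem hy η
  have h2 : HasFDerivWithinAt (fun z => g (rightArg z η)) _ (Slab n) z :=
    (hg.hasFDerivWithinAt (rightArg_mem hz η)).comp z
      (hasFDerivAt_rightArg z η).hasFDerivWithinAt fun y hy => rightArg_mem hy η
  exact (h1.mul h2).const_smul (p η)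

lemma norm_integrandD_le {n : ℕ} (p : (Fin n → ℝ) → ℝ) (f g : Pt n n → ℂ) (z : Pt n n)
    (η : Fin n → ℝ) : ‖integrandD p f g z η‖ ≤
      ‖p η * (2 * (1 + ‖η‖ ^ 2))‖ *
        (‖f (leftArg z η)‖ * ‖fderivWithin ℝ g (Slab n) (rightArg z η)‖) +
      ‖p η‖ * (‖fderivWithin ℝ f (Slab n) (leftArg z η)‖ * ‖g (rightArg z η)‖) := by
  have h1 : ‖(fderivWithin ℝ g (Slab n) (rightArg z η)).comp (rightD η)‖ ≤
      ‖fderivWithin ℝ g (Slab n) (rightArg z η)‖ * (2 * (1 + ‖η‖ ^ 2)) :=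
    (ContinuousLinearMap.opNorm_comp_le _ _).trans
      (mul_le_mul_of_nonneg_left (norm_rightD_le η) (norm_nonneg _))
  have h2 : ‖(fderivWithin ℝ f (Slab n) (leftArg z η)).comp (leftD n)‖ ≤
      ‖fderivWithin ℝ f (Slab n) (leftArg z η)‖ :=
    (ContinuousLinearMap.opNorm_comp_le _ _).trans
      ((mul_le_mul_of_nonneg_left (norm_leftD_le n) (norm_nonneg _)).trans_eq (mul_one _))
  have h3 : ‖p η * (2 * (1 + ‖η‖ ^ 2))‖ = ‖p η‖ * (2 * (1 + ‖η‖ ^ 2)) := by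
    rw [norm_mul, Real.norm_of_nonneg (by positivity : 0 ≤ 2 * (1 + ‖η‖ ^ 2))]
  rw [integrandD, norm_smul, h3]
  calc _ ≤ ‖p η‖ * (‖f (leftArg z η)‖ *
          (‖fderivWithin ℝ g (Slab n) (rightArg z η)‖ * (2 * (1 + ‖η‖ ^ 2))) +
        ‖g (rightArg z η)‖ * ‖fderivWithin ℝ f (Slab n) (leftArg z η)‖) := by
        refine mul_le_mul_of_nonneg_left ((norm_add_le _ _).trans ?_) (norm_nonneg _)
        rw [norm_smul, norm_smul]
        gcongr
    _ = _ := by ring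

lemma exists_bound_integrandD {n : ℕ} {p : (Fin n → ℝ) → ℝ} {f g : Pt n n → ℂ}
    (hp : PolyWeight p) (hf : SchwartzSlab f) (hg : SchwartzSlab g) :
    ∃ C, ∀ z ∈ Slab n, ∀ η, ‖integrandD p f g z η‖ ≤ C * ((1 + ‖η‖ ^ 2) ^ (n + 1))⁻¹ := by
  obtain ⟨C, -, hC⟩ := dominated (hp.mul polyWeight_japanese) hf.decay hg.decay_fderivWithin 0
  obtain ⟨D, -, hD⟩ := dominated hp hf.decay_fderivWithin hg.decay 0
  refine ⟨C + D, fun z hz η => (norm_integrandD_le p f g z η).trans ?_⟩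
  rw [add_mul]
  have h1 := hC z hz η
  have h2 := hD z hz η
  rw [pow_zero, one_mul] at h1 h2
  exact add_le_add h1 h2

lemma integrable_integrandD {n : ℕ} {p : (Fin n → ℝ) → ℝ} {f g : Pt n n → ℂ} (hp : PolyWeight p)
    (hf : SchwartzSlab f) (hg : SchwartzSlab g) {z : Pt n n} (hz : z ∈ Slab n) :
    Integrable (integrandD p f g z) := by
  obtain ⟨C, hC⟩ := exists_bound_integrandD hp hf hg
  refine ((integrable_inv_pow n).const_mul C).mono' (Continuous.aestronglyMeasurable ?_)
    (Filter.Eventually.of_forall (hC z hz))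
  have h1 := continuous_comp_left hf.1.continuousOn hz
  have h2 := continuous_comp_right hg.1.continuousOn hz
  have h3 := continuous_comp_left hf.1.contDiffOn_fderivWithin.continuousOn hz
  have h4 := continuous_comp_right hg.1.contDiffOn_fderivWithin.continuousOn hz
  exact hp.1.smul ((h1.smul (h4.clm_comp continuous_rightD)).add
    (h2.smul (h3.clm_comp continuous_const)))

lemma hasFDerivWithinAt_wconv {n : ℕ} {p : (Fin n → ℝ) → ℝ} {f g : Pt n n → ℂ}
    (hp : PolyWeight p) (hf : SchwartzSlab f) (hg : SchwartzSlab g) {z : Pt n n}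
    (hz : z ∈ Slab n) :
    HasFDerivWithinAt (wconv p f g) (∫ η, integrandD p f g z η) (Slab n) z := by
  obtain ⟨C, hC⟩ := exists_bound_integrandD hp hf hg
  exact hasFDerivWithinAt_integral_s6 (convex_slab_s6 n) hz
    (fun y hy => integrable_integrand hp hf hg hy) (integrable_integrandD hp hf hg hz) hC
    ((integrable_inv_pow n).const_mul C)
    (fun y hy η => hasFDerivWithinAt_integrand p hf.1 hg.1 hy η)

lemma integrandD_apply {n : ℕ} (p : (Fin n → ℝ) → ℝ) (f g : Pt n n → ℂ) (z v : Pt n n)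
    (η : Fin n → ℝ) : integrandD p f g z η v =
      integrand p (mder (Slab n) (leftD n v) f) g z η + (integrand p f (mder (Slab n) v g) z η +
        ∑ i, integrand (fun η => (v.2.2 * η i) * p η) f (mder (Slab n) (ex i) g) z η) := by
  have hx : ((η, 0, 0) : Pt n n) = ∑ i, η i • ex i := by
    conv_lhs => rw [coord_decomp ((η, 0, 0) : Pt n n)]
    simp
  simp only [integrandD, integrand, mder, smul_apply, add_apply, ContinuousLinearMap.comp_apply, rightD_apply, hx, map_add,
    map_smul, map_sum, smul_eq_mul, Complex.real_smul]
  push_cast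
  have : ∀ i, (v.2.2 : ℂ) * (η i : ℂ) * (p η : ℂ) * (f (leftArg z η) *
      fderivWithin ℝ g (Slab n) (rightArg z η) (ex i)) = (p η : ℂ) * f (leftArg z η) * v.2.2 *
      (η i * fderivWithin ℝ g (Slab n) (rightArg z η) (ex i)) := fun i => by ring
  simp only [this, ← Finset.mul_sum]
  ring

/-- Leibniz' rule for weighted convolutions. The derivative of the right factor's argument
`x + tη` in `t` is `η`, which produces the terms with the weights `v_t η_i p(η)`. -/
lemma mder_wconv {n : ℕ} {p : (Fin n → ℝ) → ℝ} {f g : Pt n n → ℂ}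
    (hp : PolyWeight p) (hf : SchwartzSlab f) (hg : SchwartzSlab g) (v : Pt n n) {z : Pt n n}
    (hz : z ∈ Slab n) :
    mder (Slab n) v (wconv p f g) z =
      wconv p (mder (Slab n) (leftD n v) f) g z + (wconv p f (mder (Slab n) v g) z +
        ∑ i, wconv (fun η => (v.2.2 * η i) * p η) f (mder (Slab n) (ex i) g) z) := by
  have hw : ∀ i, PolyWeight fun η : Fin n → ℝ => (v.2.2 * η i) * p η := fun i =>
    ((polyWeight_const v.2.2).mul (polyWeight_coord i)).mul hp
  have hi := fun i (_ : i ∈ Finset.univ) =>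
    integrable_integrand (hw i) hf (hg.schwartz_mder (ex i)) hz
  rw [mder, (hasFDerivWithinAt_wconv hp hf hg hz).fderivWithin (uniqueDiffOn_slab_s6 n z hz),
    ContinuousLinearMap.integral_apply (integrable_integrandD hp hf hg hz)]
  simp only [integrandD_apply]
  have h1 := integrable_integrand hp (hf.schwartz_mder (leftD n v)) hg hz
  have h2 := integrable_integrand hp hf (hg.schwartz_mder v) hz
  have h3 := integrable_finsetSum _ hi
  refine (integral_add h1 (h2.add h3)).trans (congrArg₂ _ rfl ?_)
  exact (integral_add h2 h3).trans (congrArg₂ _ rfl (integral_finsetSum _ hi))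

/-! ### The space spanned by weighted convolutions is closed under differentiation -/

/-- Functions agreeing on the slab with a finite sum of weighted convolutions. -/
inductive ConvSpan {n : ℕ} : (Pt n n → ℂ) → Prop
  | zero : ConvSpan fun _ => 0
  | base {p : (Fin n → ℝ) → ℝ} {f g : Pt n n → ℂ} (hp : PolyWeight p) (hf : SchwartzSlab f)
      (hg : SchwartzSlab g) : ConvSpan (wconv p f g)
  | add {a b : Pt n n → ℂ} : ConvSpan a → ConvSpan b → ConvSpan fun z => a z + b z
  | congr {a b : Pt n n → ℂ} : ConvSpan a → EqOn b a (Slab n) → ConvSpan b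

lemma ConvSpan.sum {n : ℕ} {ι : Type*} (s : Finset ι) {a : ι → Pt n n → ℂ}
    (h : ∀ i, ConvSpan (a i)) : ConvSpan fun z => ∑ i ∈ s, a i z := by
  classical
  induction s using Finset.induction_on with
  | empty => simpa using ConvSpan.zero
  | insert i s hi ih =>
    simp only [Finset.sum_insert hi]
    exact (h i).add ih

lemma ConvSpan.differentiableOn {n : ℕ} {a : Pt n n → ℂ} (h : ConvSpan a) :
    DifferentiableOn ℝ a (Slab n) := by
  induction h with
  | zero => exact differentiableOn_const _
  | base hp hf hg => exact fun z hz => (hasFDerivWithinAt_wconv hp hf hg hz).differentiableWithinAt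
  | add _ _ ha hb => exact ha.add hb
  | congr _ hab ha => exact ha.congr hab

lemma ConvSpan.decay {n : ℕ} {a : Pt n n → ℂ} (h : ConvSpan a) : DecayOnSlab a := by
  induction h with
  | zero => exact fun k => ⟨0, le_rfl, by simp⟩
  | base hp hf hg => exact decay_wconv hp hf hg
  | @add a b _ _ ha hb =>
    intro k
    obtain ⟨A, hA0, hA⟩ := ha k
    obtain ⟨B, hB0, hB⟩ := hb k
    refine ⟨A + B, add_nonneg hA0 hB0, fun z hz => ?_⟩
    refine (mul_le_mul_of_nonneg_left (norm_add_le _ _) (by positivity)).trans ?_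
    rw [mul_add]
    exact add_le_add (hA z hz) (hB z hz)
  | congr _ hab ha =>
    intro k
    obtain ⟨A, hA0, hA⟩ := ha k
    exact ⟨A, hA0, fun z hz => by rw [hab hz]; exact hA z hz⟩

lemma ConvSpan.mder {n : ℕ} {a : Pt n n → ℂ} (h : ConvSpan a) (v : Pt n n) :
    ConvSpan (mder (Slab n) v a) := by
  induction h with
  | zero =>
    refine ConvSpan.zero.congr fun z _ => ?_
    simp [_root_.mder]
  | @base p f g hp hf hg =>
    refine ConvSpan.congr ?_ fun z hz => mder_wconv hp hf hg v hz
    exact (ConvSpan.base hp (hf.schwartz_mder _) hg).add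
      ((ConvSpan.base hp hf (hg.schwartz_mder v)).add
        (ConvSpan.sum _ fun i => ConvSpan.base
          (((polyWeight_const v.2.2).mul (polyWeight_coord i)).mul hp) hf
          (hg.schwartz_mder _)))
  | @add a b ha hb iha ihb =>
    refine (iha.add ihb).congr fun z hz => ?_
    have := ((ha.differentiableOn z hz).hasFDerivWithinAt.add
      (hb.differentiableOn z hz).hasFDerivWithinAt).fderivWithin (uniqueDiffOn_slab_s6 n z hz)
    exact congrArg (fun A : Pt n n →L[ℝ] ℂ => A v) this
  | congr _ hab ha => rwa [mder_congr_s6 hab v]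

lemma ConvSpan.wordD {n : ℕ} {a : Pt n n → ℂ} (h : ConvSpan a) (L : List (Pt n n)) :
    ConvSpan (wordD L a) := by
  induction L with
  | nil => exact h
  | cons v L ih => exact ih.mder v

lemma ConvSpan.smoothOnSlab {n : ℕ} {a : Pt n n → ℂ} (h : ConvSpan a) : SmoothOnSlab a := by
  have key : ∀ (m : ℕ) (a : Pt n n → ℂ), ConvSpan a → ContDiffOn ℝ m a (Slab n) := by
    intro m
    induction m with
    | zero => exact fun a ha => contDiffOn_zero.2 ha.differentiableOn.continuousOn
    | succ m ih =>
      intro a ha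
      push_cast
      rw [contDiffOn_succ_iff_fderivWithin (uniqueDiffOn_slab_s6 n)]
      refine ⟨ha.differentiableOn, by simp, ?_⟩
      rw [contDiffOn_clm_apply]
      exact fun v => ih _ (ha.mder v)
  exact contDiffOn_infty.2 fun m => key m a h

/-! ### Conic support -/

/-- If `f` and `g` are supported in `K` and `K'`, the convolution is supported in the set of
`(x, a + b, t)` with `(x, a, t) ∈ K` and `(x + a, b, t) ∈ K'`. -/
lemma hasConicSupport_bconv {n : ℕ} {f g : Pt n n → ℂ}
    (hf : HasConicSupport (univ : Set ((Fin n → ℝ) × (Fin n → ℝ))) f)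
    (hg : HasConicSupport (univ : Set ((Fin n → ℝ) × (Fin n → ℝ))) g) :
    HasConicSupport (univ : Set ((Fin n → ℝ) × (Fin n → ℝ))) (bconv f g) := by
  obtain ⟨K, ⟨hKc, hKu, hK0⟩, hK⟩ := hf
  obtain ⟨K', ⟨hKc', hKu', hK0'⟩, hK'⟩ := hg
  let T : Set (Pt n n × Pt n n) := {q | q.1.1 + q.1.2.1 = q.2.1 ∧ q.1.2.2 = q.2.2.2}
  have hT : IsClosed T :=
    (isClosed_eq (by fun_prop) (by fun_prop)).inter (isClosed_eq (by fun_prop) (by fun_prop))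
  let φ : Pt n n × Pt n n → Pt n n := fun q => (q.1.1, q.1.2.1 + q.2.2.1, q.1.2.2)
  have hφ : Continuous φ := by
    change Continuous fun q : Pt n n × Pt n n => (q.1.1, q.1.2.1 + q.2.2.1, q.1.2.2)
    fun_prop
  refine ⟨φ '' ((K ×ˢ K') ∩ T), ⟨((hKc.prod hKc').inter_right hT).image hφ, ?_, ?_⟩, ?_⟩
  · rintro _ ⟨q, ⟨⟨h1, -⟩, -⟩, rfl⟩
    exact ⟨mem_univ _, (hKu _ h1).2⟩
  · rintro _ ⟨q, ⟨⟨h1, h2⟩, -, h4⟩, rfl⟩ h0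
    change q.1.2.2 = 0 at h0
    change q.1.2.1 + q.2.2.1 = 0
    rw [hK0 _ h1 h0, hK0' _ h2 (h4 ▸ h0), add_zero]
  · intro z hz ht hzK
    have hzero : ∀ η, f (leftArg z η) * g (rightArg z η) = 0 := by
      intro η
      by_contra hne
      have h1 : (z.1, z.2.2 • η, z.2.2) ∈ K := by
        by_contra h
        exact hne (by rw [hK _ (leftArg_mem hz η) ht h, zero_mul])
      have h2 : (z.1 + z.2.2 • η, z.2.2 • (z.2.1 - η), z.2.2) ∈ K' := by
        by_contra h
        exact hne (by rw [hK' _ (rightArg_mem hz η) ht h, mul_zero])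
      refine hzK ⟨(_, _), ⟨⟨h1, h2⟩, rfl, rfl⟩, ?_⟩
      simp [φ, ← smul_add]
    change (∫ η, f (leftArg z η) * g (rightArg z η)) = 0
    simp only [hzero, integral_zero]

/-- main Theorem of the paper for Connes' tangent groupoid of `ℝ^n`: for
`f, g ∈ B_n = S_{r,c}(𝒢^T_{ℝ^n})` (here `B_n = MemSrc univ`, i.e. smooth functions on
`ℝ^n × ℝ^n × [0,1]` with conic compact support and rapid decay), the product
`(f ⋆ g)(x,ξ,t) = ∫ f(x,η,t)·g(x+tη, ξ−η, t) dη` is well defined and belongs to `B_n`. -/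
theorem stmt6 {n : ℕ} (f g : Pt n n → ℂ)
    (hf : MemSrc (univ : Set ((Fin n → ℝ) × (Fin n → ℝ))) f)
    (hg : MemSrc (univ : Set ((Fin n → ℝ) × (Fin n → ℝ))) g) :
    (∀ z ∈ Omega (univ : Set ((Fin n → ℝ) × (Fin n → ℝ))),
      Integrable (fun η : Fin n → ℝ =>
        f (z.1, η, z.2.2) * g (z.1 + z.2.2 • η, z.2.1 - η, z.2.2))) ∧
    MemSrc (univ : Set ((Fin n → ℝ) × (Fin n → ℝ))) (bconv f g) := by
  have hf' := hf.schwartzSlab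
  have hg' := hg.schwartzSlab
  have hb : bconv f g = wconv (fun _ => 1) f g := by
    funext z
    simp only [wconv, integrand, one_smul]
    rfl
  have hspan : ConvSpan (bconv f g) := hb ▸ ConvSpan.base (polyWeight_const 1) hf' hg'
  refine ⟨fun z hz => ?_, hspan.smoothOnSlab, hasConicSupport_bconv hf.2.1 hg.2.1, ?_⟩
  · have h : Integrable fun η : Fin n → ℝ =>
        (1 : ℝ) • (f (leftArg z η) * g (rightArg z η)) :=
      integrable_integrand (polyWeight_const 1) hf' hg' hz
    simp only [one_smul] at h
    exact h
  · intro k m l α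
    obtain ⟨C, hC0, hC⟩ := (hspan.wordD (mixedWord l α m)).decay k
    refine ⟨C + 1, by linarith, fun z hz => ?_⟩
    rw [mixedD_eq_wordD]
    exact (hC z hz).trans (by linarith)
end
end
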